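/- arXiv:2001.03938 — 2 statements merged into one kernel-verified Lean document; each statement's English description precedes it below -/
import Mathlib

section
/- Let G be a simple graph on [n] whose edge ideal I = I(G) has almost maximal finite index, i.e., index(I) = pd(I) − 1. Then every induced cycle of length greater than 3 in the complement graph of G has length exactly index(I) + 3. -/
open Finsupp

namespace EP

variable (K : Type) [Field K]

/-! ## Simplicial chains over a linearly ordered vertex set -/

variable {V : Type} [Fintype V] [DecidableEq V] [LinearOrder V]

/-- Boundary of a single (oriented) face, given as a finset. -/
noncomputable def bdFace (s : Finset V) : Finset V →₀ K :=
  ∑ v ∈ s, ((-1 : K) ^ ((s.filter (fun w => w < v)).card)) • Finsupp.single (s.erase v) 1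

/-- The simplicial boundary map on the free module on all finsets of vertices
(the augmented oriented chain complex, with the empty set playing the role of
the `(-1)`-dimensional face). -/
noncomputable def bdS : (Finset V →₀ K) →ₗ[K] (Finset V →₀ K) :=
  Finsupp.lsum K fun s => LinearMap.toSpanSingleton K (Finset V →₀ K) (bdFace K s)

/-- Chains supported on faces of a complex `Δ` having `k` vertices. -/
noncomputable def faceSpan (Δ : Set (Finset V)) (k : ℕ) : Submodule K (Finset V →₀ K) :=
  Submodule.span K {c | ∃ F ∈ Δ, F.card = k ∧ c = Finsupp.single F 1}

/-- Dimension of the `d`-th reduced simplicial homology of `Δ` over `K`. -/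
noncomputable def redHomRank (Δ : Set (Finset V)) (d : ℕ) : ℕ :=
  Module.finrank K ↥(faceSpan K Δ (d+1) ⊓ LinearMap.ker (bdS K)) -
    Module.finrank K
      ↥(Submodule.map (bdS K) (faceSpan K Δ (d+2)) ⊓
          (faceSpan K Δ (d+1) ⊓ LinearMap.ker (bdS K)))

/-- The flag complex of a graph: faces are the cliques. -/
def flagComplex (G : SimpleGraph V) : Set (Finset V) :=
  {F | ∀ i ∈ F, ∀ j ∈ F, i ≠ j → G.Adj i j}

/-- The flag complex of the induced subgraph of `G` on `W`. -/
def flagComplexOn (G : SimpleGraph V) (W : Finset V) : Set (Finset V) :=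
  {F | (F : Set V) ⊆ (W : Set V) ∧ ∀ i ∈ F, ∀ j ∈ F, i ≠ j → G.Adj i j}

/-- The induced subcomplex of `Δ` on a vertex subset `W`. -/
def restrictComplex (Δ : Set (Finset V)) (W : Finset V) : Set (Finset V) :=
  {F | F ∈ Δ ∧ F ⊆ W}

/-- The oriented `1`-chain `[a,b]` (so `[a,b] = -[b,a]`). -/
noncomputable def edgeChain (a b : V) : Finset V →₀ K :=
  if a < b then Finsupp.single {a, b} 1 else -Finsupp.single {a, b} 1

/-- The oriented `2`-chain `[x,y,z]`, antisymmetric under transpositions. -/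
noncomputable def triChain (x y z : V) : Finset V →₀ K :=
  if (x < y ∧ y < z) ∨ (y < z ∧ z < x) ∨ (z < x ∧ x < y)
  then Finsupp.single {x, y, z} 1
  else -Finsupp.single {x, y, z} 1

/-! ## Graded Betti numbers of monomial ideals via the Taylor complex -/

variable {n : ℕ}

/-- The multidegree lcm of the monomial generators indexed by `S`. -/
def mlcm {r : ℕ} (g : Fin r → (Fin n → ℕ)) (S : Finset (Fin r)) : Fin n → ℕ :=
  fun x => S.sup fun k => g k x

/-- The differential of the Taylor complex tensored with the residue field `K`. -/
noncomputable def bdT {r : ℕ} (g : Fin r → (Fin n → ℕ)) :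
    (Finset (Fin r) →₀ K) →ₗ[K] (Finset (Fin r) →₀ K) :=
  Finsupp.lsum K fun S => LinearMap.toSpanSingleton K (Finset (Fin r) →₀ K)
    (∑ k ∈ S, if mlcm g (S.erase k) = mlcm g S
      then ((-1 : K) ^ ((S.filter (fun j => j < k)).card)) • Finsupp.single (S.erase k) (1 : K)
      else 0)

/-- The degree-`j` strand of the Taylor complex in homological degree `p`. -/
noncomputable def strand {r : ℕ} (g : Fin r → (Fin n → ℕ)) (p j : ℕ) :
    Submodule K (Finset (Fin r) →₀ K) :=
  Submodule.span K
    {c | ∃ S : Finset (Fin r), S.card = p ∧ (∑ x, mlcm g S x) = j ∧ c = Finsupp.single S 1}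

/-- `dim_K Tor_p(S/I, K)_j`, computed from the Taylor complex on the monomial
generators `g` of `I`. -/
noncomputable def torRank {r : ℕ} (g : Fin r → (Fin n → ℕ)) (p j : ℕ) : ℕ :=
  Module.finrank K ↥(strand K g p j ⊓ LinearMap.ker (bdT K g)) -
    Module.finrank K
      ↥(Submodule.map (bdT K g) (strand K g (p+1) j) ⊓
          (strand K g p j ⊓ LinearMap.ker (bdT K g)))

/-- The graded Betti number `β_{i,j}(I)` of the monomial ideal `I` generated by
the monomials with exponent vectors `g`, i.e. `dim_K Tor_i(I, K)_j = dim_K Tor_{i+1}(S/I, K)_j`. -/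
noncomputable def betti {r : ℕ} (g : Fin r → (Fin n → ℕ)) (i j : ℕ) : ℕ :=
  torRank K g (i+1) j

/-- The monomial with exponent vector `a`. -/
noncomputable def mono (a : Fin n → ℕ) : MvPolynomial (Fin n) K :=
  MvPolynomial.monomial (Finsupp.equivFunOnFinite.symm a) 1

/-- `g` is a list of exponent vectors of monomials generating the ideal `I`. -/
def IsGenSet {r : ℕ} (g : Fin r → (Fin n → ℕ)) (I : Ideal (MvPolynomial (Fin n) K)) : Prop :=
  Ideal.span (Set.range fun k => mono K (g k)) = I

/-- The ideal (generated by the monomials with exponent vectors `g`) has a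
`d`-linear resolution. -/
def HasLinRes {r : ℕ} (g : Fin r → (Fin n → ℕ)) (d : ℕ) : Prop :=
  ∀ i j, betti K g i j ≠ 0 → j = i + d

/-- Castelnuovo–Mumford regularity of a monomial ideal, from its Betti numbers. -/
noncomputable def regT {r : ℕ} (g : Fin r → (Fin n → ℕ)) : ℕ :=
  sSup {d | ∃ i j, betti K g i j ≠ 0 ∧ j = i + d}

/-! ## Edge ideals -/

/-- The edge ideal of a simple graph. -/
noncomputable def edgeIdeal (G : SimpleGraph (Fin n)) : Ideal (MvPolynomial (Fin n) K) :=
  Ideal.span {m | ∃ i j : Fin n, G.Adj i j ∧ m = MvPolynomial.X i * MvPolynomial.X j}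

/-- The edge set of `G` as a finset. -/
noncomputable def edgeFins (G : SimpleGraph (Fin n)) : Finset (Sym2 (Fin n)) :=
  letI : Fintype ↥G.edgeSet := Fintype.ofFinite _
  G.edgeFinset

/-- The canonical monomial (exponent vector) generators of the edge ideal of `G`. -/
noncomputable def edgeGens (G : SimpleGraph (Fin n)) : Fin (edgeFins G).card → (Fin n → ℕ) :=
  fun k x => if x ∈ ((edgeFins G).equivFin.symm k : Sym2 (Fin n)) then 1 else 0

/-- The graded Betti numbers `β_{i,j}(I(G))` of the edge ideal of `G` over `K`. -/
noncomputable def gBetti (G : SimpleGraph (Fin n)) (i j : ℕ) : ℕ :=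
  betti K (edgeGens G) i j

/-- The projective dimension `pd(I(G))` of the edge ideal of `G` over `K`. -/
noncomputable def gPd (G : SimpleGraph (Fin n)) : ℕ :=
  sSup {i | ∃ j, gBetti K G i j ≠ 0}

/-- The Green–Lazarsfeld index of the edge ideal of `G` over `K`
(`⊤` iff the ideal has a linear resolution). -/
noncomputable def gIndex (G : SimpleGraph (Fin n)) : ℕ∞ :=
  sInf {N : ℕ∞ | ∃ i j : ℕ, N = (i : ℕ∞) ∧ i + 2 < j ∧ gBetti K G i j ≠ 0}

/-- The regularity of the edge ideal of `G` over `K`. -/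
noncomputable def gReg (G : SimpleGraph (Fin n)) : ℕ :=
  sSup {d | ∃ i j, gBetti K G i j ≠ 0 ∧ j = i + d}

/-- The edge ideal of `G` has a (2-)linear resolution over `K`. -/
def gLinRes (G : SimpleGraph (Fin n)) : Prop :=
  ∀ i j, gBetti K G i j ≠ 0 → j = i + 2

/-- The edge ideal of `G` has almost maximal finite index over `K`:
`index(I(G)) = pd(I(G)) - 1` (with the index finite). -/
def AMFI (G : SimpleGraph (Fin n)) : Prop :=
  gIndex K G + 1 = (gPd K G : ℕ∞)

/-! ## Graph-theoretic notions -/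

/-- `H` contains an induced (chordless) cycle of length `l`. -/
def HasInducedCycle {W : Type} (H : SimpleGraph W) (l : ℕ) : Prop :=
  ∃ f : ZMod l → W, Function.Injective f ∧
    ∀ i j : ZMod l, H.Adj (f i) (f j) ↔ (j = i + 1 ∨ i = j + 1)

/-- `H` is chordal: it has no induced cycle of length greater than `3`. -/
def Chordal {W : Type} (H : SimpleGraph W) : Prop :=
  ∀ l : ℕ, 3 < l → ¬ HasInducedCycle H l

end EP

set_option linter.unusedSectionVars false
set_option linter.unusedVariables false
namespace EPX
open Finset
variable (K : Type) [Field K]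
section basic
variable {ι : Type} [Fintype ι] [LinearOrder ι]

noncomputable def sg (X : Finset ι) (a : ι) : K := (-1 : K) ^ ((X.filter (fun w => w < a)).card)

lemma sg_sq (X : Finset ι) (a : ι) : sg K X a * sg K X a = 1 := by
  unfold sg
  rw [← pow_add, ← two_mul, pow_mul]; simp

lemma sg_ne (X : Finset ι) (a : ι) : sg K X a ≠ 0 := by
  unfold sg
  exact pow_ne_zero _ (by simp)

lemma sg_swap_lt (X : Finset ι) (a b : ι) (ha : a ∈ X) (hab : a < b) :
    sg K X a * sg K (X.erase a) b = -(sg K X b * sg K (X.erase b) a) := by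
  unfold sg
  have h1 : (X.erase b).filter (fun w => w < a) = X.filter (fun w => w < a) := by
    ext x; simp only [mem_filter, mem_erase]
    constructor
    · rintro ⟨⟨_, h⟩, h'⟩; exact ⟨h, h'⟩
    · rintro ⟨h, h'⟩; exact ⟨⟨(h'.trans hab).ne, h⟩, h'⟩
  have h2 : (X.erase a).filter (fun w => w < b) = (X.filter (fun w => w < b)).erase a := by
    ext x; simp only [mem_filter, mem_erase]; tauto
  have h3 : a ∈ X.filter (fun w => w < b) := by simp [ha, hab]
  have h4 := card_erase_add_one h3
  rw [h1, h2, ← h4, pow_succ]; ring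

lemma sg_swap (X : Finset ι) (a b : ι) (ha : a ∈ X) (hb : b ∈ X) (hab : a ≠ b) :
    sg K X a * sg K (X.erase a) b = -(sg K X b * sg K (X.erase b) a) := by
  rcases lt_or_gt_of_ne hab with h | h
  · exact sg_swap_lt K X a b ha h
  · rw [sg_swap_lt K X b a hb h, neg_neg]

variable {K}

noncomputable def bd (z : Finset ι → K) (X : Finset ι) : K :=
  ∑ a ∈ Xᶜ, sg K (insert a X) a * z (insert a X)

lemma bd_sub (z y : Finset ι → K) : bd (z - y) = bd z - bd y := by
  ext X; simp [bd, mul_sub]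
lemma bd_add (z y : Finset ι → K) : bd (z + y) = bd z + bd y := by
  ext X; simp [bd, mul_add, sum_add_distrib]
lemma bd_zero : bd (0 : Finset ι → K) = 0 := by
  ext X; simp [bd]

lemma bd_ne {z : Finset ι → K} {X : Finset ι} (h : bd z X ≠ 0) :
    ∃ a, a ∉ X ∧ z (insert a X) ≠ 0 := by
  obtain ⟨a, ha, h⟩ := exists_ne_zero_of_sum_ne_zero h
  exact ⟨a, by simpa using ha, right_ne_zero_of_mul h⟩

lemma bd_bd (z : Finset ι → K) : bd (bd z) = 0 := by
  ext X
  simp only [bd, Finset.mul_sum, Pi.zero_apply]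
  rw [sum_sigma']
  refine sum_involution (fun p _ => ⟨p.2, p.1⟩) ?_ ?_ ?_ ?_
  · rintro ⟨a, b⟩ h
    simp only [mem_sigma, mem_compl, mem_insert, not_or] at h
    obtain ⟨ha, hba, hb⟩ := h
    dsimp only
    have := sg_swap K (insert a (insert b X)) a b (by simp) (by simp) (Ne.symm hba)
    have c := Finset.insert_comm b a X
    rw [erase_insert (by simp [ha, Ne.symm hba]), ← c, erase_insert (by simp [hb, hba])] at this
    rw [← c]
    linear_combination (z (insert b (insert a X))) * this
  · rintro ⟨a, b⟩ h _ h'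
    simp only [mem_sigma, mem_compl, mem_insert, not_or] at h
    simp only [Sigma.mk.injEq, heq_eq_eq] at h'
    exact h.2.1 h'.1
  · rintro ⟨a, b⟩ h
    simp only [mem_sigma, mem_compl, mem_insert, not_or] at h ⊢
    exact ⟨h.2.2, Ne.symm h.2.1, h.1⟩
  · rintro ⟨a, b⟩ h; rfl

variable (K) in
def Ac (C : Set (Finset ι)) (p : ℕ) : Prop :=
  ∀ z : Finset ι → K, (∀ X, z X ≠ 0 → X ∈ C ∧ X.card = p) → (∀ X ∈ C, bd z X = 0) →
    ∃ y : Finset ι → K, (∀ X, y X ≠ 0 → X ∈ C ∧ X.card = p + 1) ∧ ∀ X ∈ C, bd y X = z X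

open Classical in
noncomputable def res (C : Set (Finset ι)) (z : Finset ι → K) : Finset ι → K :=
  fun X => if X ∈ C then z X else 0

lemma res_ne {C : Set (Finset ι)} {z : Finset ι → K} {X} (h : res C z X ≠ 0) : X ∈ C ∧ z X ≠ 0 := by
  unfold res at h
  split_ifs at h with h1
  · exact ⟨h1, h⟩
  · simp at h

lemma bd_res {C : Set (Finset ι)} {z : Finset ι → K} {X}
    (h : ∀ a, a ∉ X → z (insert a X) ≠ 0 → insert a X ∈ C) : bd (res C z) X = bd z X := by
  unfold bd
  refine sum_congr rfl fun a ha => ?_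
  unfold res
  split_ifs with h1
  · rfl
  · by_cases h2 : z (insert a X) = 0
    · rw [h2]
    · exact absurd (h a (by simpa using ha) h2) h1

noncomputable def hh (w : Finset ι → ι) (z : Finset ι → K) (Y : Finset ι) : K :=
  if w Y ∈ Y then sg K Y (w Y) * z (Y.erase (w Y)) else 0

open Classical in
lemma acyc_step (P : ι → Prop) (N : Set (Finset ι)) (w : Finset ι → ι)
    (hwP : ∀ X, ¬ P (w X)) (hwc : ∀ X a, ¬ P a → w (insert a X) = w X)
    (z : Finset ι → K) (hz : bd z = 0) (m : ℕ)
    (hm : ∀ X, z X ≠ 0 → (X.filter P).card ≤ m) (X : Finset ι) (hX : m ≤ (X.filter P).card) :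
    bd (hh w z) X = z X := by
  have key : ∀ a, a ∉ X → P a → hh w z (insert a X) = 0 := by
    intro a ha hPa
    unfold hh
    split_ifs with h1
    · rw [mul_eq_zero]; right
      by_contra h2
      have := hm _ h2
      have e : ((insert a X).erase (w (insert a X))).filter P = insert a (X.filter P) := by
        ext x; simp only [mem_filter, mem_erase, mem_insert]
        have := hwP (insert a X)
        constructor
        · tauto
        · rintro (rfl | ⟨h, h'⟩)
          · refine ⟨⟨?_, Or.inl rfl⟩, hPa⟩
            rintro h; rw [← h] at this; exact this hPa
          · refine ⟨⟨?_, Or.inr h⟩, h'⟩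
            rintro h; rw [← h] at this; exact this h'
      rw [e, card_insert_of_notMem (by simp [ha])] at this
      omega
    · rfl
  have keyz : ∀ Y a, a ∉ X → P a → Y.filter P = X.filter P → z (insert a Y) = 0 := by
    intro Y a ha hPa hY
    by_contra h2
    have := hm _ h2
    rw [filter_insert, if_pos hPa, hY, card_insert_of_notMem (by simp [ha])] at this
    omega
  by_cases hw : w X ∈ X
  · have h0 : bd z (X.erase (w X)) = 0 := by rw [hz]; rfl
    unfold bd at h0 ⊢
    have e1 : (X.erase (w X))ᶜ = insert (w X) Xᶜ := by
      ext x; simp only [mem_compl, mem_erase, mem_insert]; tauto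
    rw [e1, sum_insert (by simp [hw]), insert_erase hw] at h0
    have e2 : ∀ a ∈ Xᶜ, sg K (insert a X) a * hh w z (insert a X) =
       - sg K X (w X) * (sg K (insert a (X.erase (w X))) a * z (insert a (X.erase (w X)))) := by
      intro a ha
      have ha' : a ∉ X := by simpa using ha
      by_cases hPa : P a
      · rw [key a ha' hPa, keyz (X.erase (w X)) a ha' hPa]
        · simp
        · ext x; simp only [mem_filter, mem_erase]
          constructor
          · tauto
          · rintro ⟨h, h'⟩; exact ⟨⟨fun hh => hwP X (hh ▸ h'), h⟩, h'⟩
      · unfold hh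
        rw [hwc X a hPa, if_pos (by simp [hw])]
        have hne : w X ≠ a := fun h => ha' (h ▸ hw)
        have := sg_swap K (insert a X) a (w X) (by simp) (by simp [hw]) hne.symm
        rw [erase_insert ha', erase_insert_of_ne hne.symm] at this
        rw [erase_insert_of_ne hne.symm]
        have s1 := sg_sq K X (w X)
        have s2 := sg_sq K (insert a X) a
        have s3 := sg_sq K (insert a (X.erase (w X))) a
        generalize z (insert a (X.erase (w X))) = c
        generalize sg K (insert a X) a = p at *
        generalize sg K (insert a X) (w X) = q at *
        generalize sg K X (w X) = r at *
        generalize sg K (insert a (X.erase (w X))) a = s at *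
        -- p r = - q s
        linear_combination (c * s * p) * this - c*p*q * s3 - r * s * c * s2
    rw [sum_congr rfl e2, ← Finset.mul_sum]
    have s1 := sg_sq K X (w X)
    linear_combination (- sg K X (w X)) * h0 + z X * s1
  · unfold bd
    rw [Finset.sum_eq_single (w X)]
    · unfold hh
      rw [hwc X _ (hwP X), if_pos (by simp), erase_insert hw, ← mul_assoc, sg_sq, one_mul]
    · intro a ha hne
      have ha' : a ∉ X := by simpa using ha
      by_cases hPa : P a
      · rw [key a ha' hPa, mul_zero]
      · unfold hh
        rw [hwc X a hPa, if_neg (by simp [hw, hne.symm]), mul_zero]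
    · intro h; simp at h; exact absurd h hw

open Classical in
lemma acyc_aux (P : ι → Prop) (N : Set (Finset ι)) (w : Finset ι → ι)
    (hwP : ∀ X, ¬ P (w X)) (hwc : ∀ X a, ¬ P a → w (insert a X) = w X)
    (hNw : ∀ X ∈ N, insert (w X) X ∈ N) (hNd : ∀ X a, insert a X ∈ N → X ∈ N) (m : ℕ) :
    ∀ (p : ℕ) (z : Finset ι → K), (∀ X, z X ≠ 0 → X ∈ N ∧ X.card = p) → bd z = 0 →
    (∀ X, z X ≠ 0 → (X.filter P).card < m) →
    ∃ y : Finset ι → K, (∀ X, y X ≠ 0 → X ∈ N ∧ X.card = p + 1) ∧ bd y = z := by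
  induction m with
  | zero =>
    intro p z hs hz hm
    refine ⟨0, by simp, ?_⟩
    rw [bd_zero]; ext X
    by_contra h
    exact absurd (hm X (Ne.symm h)) (by simp)
  | succ m ih =>
    intro p z hs hz hm
    have hh1 : ∀ X, hh w z X ≠ 0 → X ∈ N ∧ X.card = p + 1 := by
      intro X hX
      unfold hh at hX
      split_ifs at hX with h1
      · have h2 := hs _ (right_ne_zero_of_mul hX)
        have h3 := hNw _ h2.1
        have h4 := hwc (X.erase (w X)) (w X) (hwP X)
        rw [insert_erase h1] at h4
        rw [← h4, insert_erase h1] at h3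
        refine ⟨h3, ?_⟩
        rw [← h2.2, card_erase_add_one h1]
      · simp at hX
    have g1 : ∀ X, (z - bd (hh w z)) X ≠ 0 → X ∈ N ∧ X.card = p := by
      intro X hX
      by_cases h : z X = 0
      · have : bd (hh w z) X ≠ 0 := by simpa [h] using hX
        obtain ⟨a, ha, h⟩ := bd_ne this
        have := hh1 _ h
        refine ⟨hNd _ _ this.1, ?_⟩
        have h2 := this.2
        rw [card_insert_of_notMem ha] at h2; omega
      · exact hs X h
    have g2 : bd (z - bd (hh w z)) = 0 := by rw [bd_sub, hz, bd_bd, sub_zero]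
    have g3 : ∀ X, (z - bd (hh w z)) X ≠ 0 → (X.filter P).card < m := by
      intro X hX
      by_contra h
      push Not at h
      apply hX
      have := acyc_step P N w hwP hwc z hz m (fun X hX => Nat.lt_succ_iff.mp (hm X hX)) X h
      simp [this]
    obtain ⟨y, hy1, hy2⟩ := ih p (z - bd (hh w z)) g1 g2 g3
    refine ⟨y + hh w z, ?_, ?_⟩
    · intro X hX
      by_cases h : y X = 0
      · apply hh1; simpa [h] using hX
      · exact hy1 X h
    · rw [bd_add, hy2]; simp

/-- complex data -/
def MM (P Q : ι → Prop) (R : ι → ι → Prop) : Set (Finset ι) :=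
  {X | (∀ a ∈ X, P a ∨ Q a) ∧ ∀ a ∈ X, ∀ b ∈ X, P a → Q b → R a b}
def NN (P Q : ι → Prop) (R : ι → ι → Prop) : Set (Finset ι) :=
  {X | X ∈ MM P Q R ∧ ∃ v, Q v ∧ ∀ a ∈ X, P a → R a v}
def TT (P Q : ι → Prop) (R : ι → ι → Prop) : Set (Finset ι) :=
  {X | (∀ a ∈ X, P a) ∧ ¬ ∃ v, Q v ∧ ∀ a ∈ X, R a v}

lemma MM_flip (P Q : ι → Prop) (R : ι → ι → Prop) : MM Q P (flip R) = MM P Q R := by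
  ext X; simp only [MM, flip, Set.mem_ofPred_eq]
  constructor
  · rintro ⟨h1, h2⟩; exact ⟨fun a ha => (h1 a ha).symm, fun a ha b hb p q => h2 b hb a ha q p⟩
  · rintro ⟨h1, h2⟩; exact ⟨fun a ha => (h1 a ha).symm, fun a ha b hb p q => h2 b hb a ha q p⟩

lemma MM_down {P Q : ι → Prop} {R : ι → ι → Prop} {X Y} (h : Y ∈ MM P Q R) (hXY : X ⊆ Y) :
    X ∈ MM P Q R :=
  ⟨fun a ha => h.1 a (hXY ha), fun a ha b hb => h.2 a (hXY ha) b (hXY hb)⟩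
lemma NN_down {P Q : ι → Prop} {R : ι → ι → Prop} {X Y} (h : Y ∈ NN P Q R) (hXY : X ⊆ Y) :
    X ∈ NN P Q R := by
  obtain ⟨h, v, hv, h'⟩ := h
  exact ⟨MM_down h hXY, v, hv, fun a ha => h' a (hXY ha)⟩

lemma TT_iff {P Q : ι → Prop} {R : ι → ι → Prop} (hPQ : ∀ a, P a → ¬ Q a) {X} :
    X ∈ TT P Q R ↔ X ∈ MM P Q R ∧ X ∉ NN P Q R := by
  constructor
  · rintro ⟨h1, h2⟩
    refine ⟨⟨fun a ha => Or.inl (h1 a ha), fun a ha b hb _ hq => absurd hq (hPQ b (h1 b hb))⟩, ?_⟩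
    rintro ⟨_, v, hv, h⟩
    exact h2 ⟨v, hv, fun a ha => h a ha (h1 a ha)⟩
  · rintro ⟨h1, h2⟩
    have h3 : ∀ a ∈ X, P a := by
      intro a ha
      rcases h1.1 a ha with h | h
      · exact h
      · exact absurd ⟨h1, a, h, fun b hb hp => h1.2 b hb a ha hp h⟩ h2
    refine ⟨h3, ?_⟩
    rintro ⟨v, hv, h⟩
    exact h2 ⟨h1, v, hv, fun a ha _ => h a ha⟩

open Classical in
lemma NN_acyc {P Q : ι → Prop} {R : ι → ι → Prop} (hPQ : ∀ a, P a → ¬ Q a) (p : ℕ)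
    (z : Finset ι → K) (hs : ∀ X, z X ≠ 0 → X ∈ NN P Q R ∧ X.card = p) (hz : bd z = 0) :
    ∃ y : Finset ι → K, (∀ X, y X ≠ 0 → X ∈ NN P Q R ∧ X.card = p + 1) ∧ bd y = z := by
  by_cases hne : ∃ v, Q v
  · obtain ⟨v0, hv0⟩ := hne
    let good (S : Finset ι) (v : ι) : Prop := Q v ∧ ∀ a ∈ S, R a v
    let w : Finset ι → ι := fun X => if h : ∃ v, good (X.filter P) v then h.choose else v0
    have hwQ : ∀ X, Q (w X) := by
      intro X
      simp only [w]
      split_ifs with h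
      · exact h.choose_spec.1
      · exact hv0
    have hwP : ∀ X, ¬ P (w X) := fun X h => hPQ _ h (hwQ X)
    refine acyc_aux P (NN P Q R) w hwP ?_ ?_ ?_ (Fintype.card ι + 1) p z hs hz ?_
    · intro X a ha
      simp only [w]
      rw [filter_insert, if_neg ha]
    · rintro X ⟨hX, v, hv, h⟩
      have hg : ∃ v, good (X.filter P) v := ⟨v, hv, fun a ha => by
        rw [mem_filter] at ha; exact h a ha.1 ha.2⟩
      have hwX : ∀ a ∈ X, P a → R a (w X) := by
        intro a ha hp
        simp only [w]
        rw [dif_pos hg]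
        exact hg.choose_spec.2 a (by simp [ha, hp])
      refine ⟨⟨?_, ?_⟩, w X, hwQ X, ?_⟩
      · intro a ha
        rcases mem_insert.mp ha with rfl | ha
        · exact Or.inr (hwQ X)
        · exact hX.1 a ha
      · intro a ha b hb hp hq
        rcases mem_insert.mp ha with rfl | ha
        · exact absurd hp (hwP X)
        rcases mem_insert.mp hb with rfl | hb
        · exact hwX a ha hp
        · exact hX.2 a ha b hb hp hq
      · intro a ha hp
        rcases mem_insert.mp ha with rfl | ha
        · exact absurd hp (hwP X)
        · exact hwX a ha hp
    · intro X a h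
      exact NN_down h (subset_insert _ _)
    · intro X _
      exact Nat.lt_succ_of_le (card_le_univ _)
  · refine ⟨0, by simp, ?_⟩
    rw [bd_zero]; ext X
    by_contra h
    obtain ⟨⟨_, v, hv, _⟩, _⟩ := hs X (Ne.symm h)
    exact hne ⟨v, hv⟩

lemma dowker {P Q : ι → Prop} {R : ι → ι → Prop} (hPQ : ∀ a, P a → ¬ Q a) (p : ℕ)
    (h : Ac K (TT P Q R) (p + 1)) : Ac K (TT Q P (flip R)) (p + 1) := by
  have hQP : ∀ a, Q a → ¬ P a := fun a h1 h2 => hPQ a h2 h1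
  intro z hs hz
  have iffT := fun X => TT_iff (R := R) hPQ (X := X)
  have iffQ := fun X => TT_iff (R := flip R) hQP (X := X)
  simp only [MM_flip] at iffQ
  have hN2M : ∀ X, X ∈ NN Q P (flip R) → X ∈ MM P Q R := fun X h => by
    rw [← MM_flip]; exact h.1
  obtain ⟨n, hn1, hn2⟩ := NN_acyc (K := K) (R := flip R) hQP p (bd z) (by
    intro X hX
    obtain ⟨a, ha, h1⟩ := bd_ne hX
    have h2 := hs _ h1
    have h3 := card_insert_of_notMem ha
    refine ⟨?_, by omega⟩
    by_contra h4
    exact hX (hz X ((iffQ X).2 ⟨MM_down ((iffQ _).1 h2.1).1 (subset_insert _ _), h4⟩))) (bd_bd z)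
  set u := z - n with hu
  have hbu : bd u = 0 := by rw [hu, bd_sub, hn2, sub_self]
  have hus : ∀ X, u X ≠ 0 → X ∈ MM P Q R ∧ X.card = p + 1 := by
    intro X hX
    by_cases h1 : z X = 0
    · have h2 : n X ≠ 0 := by simpa [hu, h1] using hX
      exact ⟨hN2M X (hn1 X h2).1, (hn1 X h2).2⟩
    · exact ⟨((iffQ X).1 (hs X h1).1).1, (hs X h1).2⟩
  obtain ⟨t, ht1, ht2⟩ := h (res (TT P Q R) u) (by
    intro X hX
    have := res_ne hX
    exact ⟨this.1, (hus X this.2).2⟩) (by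
    intro X hX
    rw [bd_res, hbu]; · rfl
    intro a ha h1
    rw [iffT] at hX ⊢
    exact ⟨(hus _ h1).1, fun h2 => hX.2 (NN_down h2 (subset_insert _ _))⟩)
  obtain ⟨n1, hm1, hm2⟩ := NN_acyc (K := K) (R := R) hPQ (p+1) (u - bd t) (by
    intro X hX
    have h1 : X ∈ MM P Q R ∧ X.card = p + 1 := by
      by_cases h1 : u X = 0
      · have h2 : bd t X ≠ 0 := by simpa [h1] using hX
        obtain ⟨a, ha, h3⟩ := bd_ne h2
        have h4 := ht1 _ h3
        have h5 := card_insert_of_notMem ha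
        exact ⟨MM_down ((iffT _).1 h4.1).1 (subset_insert _ _), by omega⟩
      · exact hus X h1
    refine ⟨?_, h1.2⟩
    by_contra h2
    have h3 : X ∈ TT P Q R := (iffT X).2 ⟨h1.1, h2⟩
    have h4 := ht2 X h3
    simp [res, h3] at h4
    simp [h4] at hX) (by rw [bd_sub, hbu, bd_bd, sub_zero])
  have hY : bd (t + n1) = u := by rw [bd_add, hm2]; simp
  have hYs : ∀ X, (t + n1) X ≠ 0 → X ∈ MM P Q R ∧ X.card = p + 1 + 1 := by
    intro X hX
    by_cases h1 : t X = 0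
    · have h2 : n1 X ≠ 0 := by simpa [h1] using hX
      exact ⟨(hm1 X h2).1.1, (hm1 X h2).2⟩
    · exact ⟨((iffT X).1 (ht1 X h1).1).1, (ht1 X h1).2⟩
  refine ⟨res (TT Q P (flip R)) (t + n1), ?_, ?_⟩
  · intro X hX
    have := res_ne hX
    exact ⟨this.1, (hYs X this.2).2⟩
  · intro X hX
    rw [bd_res, hY]
    · have : n X = 0 := by
        by_contra h1
        exact ((iffQ X).1 hX).2 (hn1 X h1).1
      simp [hu, this]
    · intro a ha h1
      rw [iffQ] at hX ⊢
      exact ⟨(hYs _ h1).1, fun h2 => hX.2 (NN_down h2 (subset_insert _ _))⟩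

lemma dowker_iff {P Q : ι → Prop} {R : ι → ι → Prop} (hPQ : ∀ a, P a → ¬ Q a) (p : ℕ) :
    Ac K (TT P Q R) (p + 1) ↔ Ac K (TT Q P (flip R)) (p + 1) :=
  ⟨dowker hPQ p, fun h => dowker (R := flip R) (fun a h1 h2 => hPQ a h2 h1) p h⟩

end basic

section transfer
variable {K}
variable {ι κ : Type} [Fintype ι] [LinearOrder ι] [Fintype κ] [LinearOrder κ]

lemma sg_map (e : κ ↪o ι) (S : Finset κ) (a : κ) :
    sg K (S.map e.toEmbedding) (e a) = sg K S a := by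
  unfold sg
  congr 1
  rw [filter_map, card_map]
  congr 2
  ext x; simp

lemma bd_map (e : κ ↪o ι) (z : Finset ι → K)
    (hz : ∀ X, z X ≠ 0 → ∃ S : Finset κ, X = S.map e.toEmbedding) (S : Finset κ) :
    bd z (S.map e.toEmbedding) = bd (fun S => z (S.map e.toEmbedding)) S := by
  unfold bd
  have h1 : ∀ a ∈ Sᶜ, sg K (insert a S) a * z ((insert a S).map e.toEmbedding) =
      sg K (insert (e a) (S.map e.toEmbedding)) (e a) * z (insert (e a) (S.map e.toEmbedding)) := by
    intro a _
    rw [← sg_map e, map_insert]; rfl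
  rw [sum_congr rfl h1]
  symm
  refine (sum_map Sᶜ e.toEmbedding (fun a => sg K (insert a (S.map e.toEmbedding)) a *
    z (insert a (S.map e.toEmbedding)))).symm.trans ?_
  apply sum_subset
  · intro x hx
    simp only [mem_map, mem_compl] at hx ⊢
    obtain ⟨a, ha, rfl⟩ := hx
    rintro ⟨b, hb, h⟩
    exact ha ((e.toEmbedding.injective h) ▸ hb)
  · intro x hx hx'
    rw [mul_eq_zero]; right
    by_contra h
    obtain ⟨S', hS'⟩ := hz _ h
    have : x ∈ S'.map e.toEmbedding := by rw [← hS']; simp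
    obtain ⟨a, ha, rfl⟩ := mem_map.mp this
    apply hx'
    rw [mem_compl] at hx
    refine mem_map_of_mem _ ?_
    rw [mem_compl]
    intro h'; exact hx (mem_map_of_mem _ h')

lemma Ac_map (e : κ ↪o ι) (C : Set (Finset κ)) (D : Set (Finset ι))
    (h1 : ∀ S, S ∈ C ↔ S.map e.toEmbedding ∈ D)
    (h2 : ∀ X ∈ D, ∃ S : Finset κ, X = S.map e.toEmbedding) (p : ℕ) :
    Ac K C p ↔ Ac K D p := by
  have inj := Finset.map_injective e.toEmbedding
  let ext0 (z : Finset κ → K) : Finset ι → K := Function.extend (Finset.map e.toEmbedding) z 0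
  have ext1 : ∀ z S, ext0 z (S.map e.toEmbedding) = z S := fun z S => inj.extend_apply _ _ _
  have ext2 : ∀ z X, ext0 z X ≠ 0 → ∃ S : Finset κ, X = S.map e.toEmbedding ∧ z S ≠ 0 := by
    intro z X h
    by_cases hX : ∃ S : Finset κ, S.map e.toEmbedding = X
    · obtain ⟨S, rfl⟩ := hX
      exact ⟨S, rfl, by rwa [ext1] at h⟩
    · exact absurd (Function.extend_apply' z (0 : Finset ι → K) X hX) h
  have ext3 : ∀ z S, bd (ext0 z) (S.map e.toEmbedding) = bd z S := by
    intro z S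
    rw [bd_map e]
    · simp only [ext1]
    · intro X hX
      obtain ⟨S, h, _⟩ := ext2 z X hX
      exact ⟨S, h⟩
  constructor
  · intro h z hs hz
    obtain ⟨y, hy1, hy2⟩ := h (fun S => z (S.map e.toEmbedding)) (by
      intro S hS
      have := hs _ hS
      rw [← h1, card_map] at this; exact this) (by
      intro S hS
      rw [← bd_map e z (fun X hX => h2 X (hs X hX).1)]
      exact hz _ ((h1 S).1 hS))
    refine ⟨ext0 y, ?_, ?_⟩
    · intro X hX
      obtain ⟨S, rfl, h⟩ := ext2 _ _ hX
      rw [← h1, card_map]; exact hy1 S h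
    · intro X hX
      obtain ⟨S, rfl⟩ := h2 X hX
      rw [ext3]; exact hy2 S ((h1 S).2 hX)
  · intro h z hs hz
    obtain ⟨y, hy1, hy2⟩ := h (ext0 z) (by
      intro X hX
      obtain ⟨S, rfl, h⟩ := ext2 _ _ hX
      rw [← h1, card_map]; exact hs S h) (by
      intro X hX
      obtain ⟨S, rfl⟩ := h2 X hX
      rw [ext3]; exact hz S ((h1 S).2 hX))
    refine ⟨fun S => y (S.map e.toEmbedding), ?_, ?_⟩
    · intro S hS
      have := hy1 _ hS
      rw [← h1, card_map] at this; exact this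
    · intro S hS
      rw [← bd_map e y (fun X hX => h2 X (hy1 X hX).1), hy2 _ ((h1 S).1 hS), ext1]

end transfer
end EPX
namespace EPX
open Finset EP
section taylor
variable (K : Type) [Field K]
variable {n r : ℕ} (g : Fin r → (Fin n → ℕ))

lemma torRank_zero_iff (p j : ℕ) : torRank K g p j = 0 ↔
    ∀ z ∈ strand K g p j, bdT K g z = 0 → ∃ y ∈ strand K g (p+1) j, bdT K g y = z := by
  unfold torRank
  set Z := strand K g p j ⊓ LinearMap.ker (bdT K g) with hZ
  set B := Submodule.map (bdT K g) (strand K g (p+1) j) with hB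
  rw [Nat.sub_eq_zero_iff_le]
  constructor
  · intro h z hz hz'
    have h1 : B ⊓ Z = Z := Submodule.eq_of_le_of_finrank_le inf_le_right h
    have h2 : z ∈ B ⊓ Z := by rw [h1]; exact ⟨hz, hz'⟩
    obtain ⟨y, hy, h3⟩ := h2.1
    exact ⟨y, hy, h3⟩
  · intro h
    have : B ⊓ Z = Z := by
      apply inf_eq_right.mpr
      rintro z ⟨hz, hz'⟩
      obtain ⟨y, hy, h3⟩ := h z hz hz'
      exact ⟨y, hy, h3⟩
    rw [this]

lemma mem_strand (p j : ℕ) (z : Finset (Fin r) →₀ K) : z ∈ strand K g p j ↔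
    ∀ S, z S ≠ 0 → S.card = p ∧ ∑ x, mlcm g S x = j := by
  have : strand K g p j = Finsupp.supported K K {S | S.card = p ∧ ∑ x, mlcm g S x = j} := by
    rw [Finsupp.supported_eq_span_single]
    unfold strand
    congr 1
    ext c
    simp only [Set.mem_ofPred_eq, Set.mem_image]
    constructor
    · rintro ⟨S, h1, h2, rfl⟩; exact ⟨S, ⟨h1, h2⟩, rfl⟩
    · rintro ⟨S, ⟨h1, h2⟩, rfl⟩; exact ⟨S, h1, h2, rfl⟩
  rw [this, Finsupp.mem_supported']
  constructor
  · intro h S hS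
    by_contra h'
    exact hS (h S h')
  · intro h S hS
    by_contra h'
    exact hS (h S h')

lemma bdT_apply (z : Finset (Fin r) →₀ K) (S : Finset (Fin r)) : bdT K g z S =
    ∑ k ∈ Sᶜ, if mlcm g S = mlcm g (insert k S) then sg K (insert k S) k * z (insert k S) else 0 := by
  induction z using Finsupp.induction_linear with
  | zero => simp
  | add f h hf hh =>
    rw [map_add, Finsupp.add_apply, hf, hh, ← sum_add_distrib]
    refine sum_congr rfl fun k _ => ?_
    split_ifs
    · rw [Finsupp.add_apply, mul_add]
    · simp
  | single S' c =>
    have e : bdT K g (Finsupp.single S' c) S = ∑ k ∈ S', if mlcm g (S'.erase k) = mlcm g S'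
      then c * (sg K S' k * Finsupp.single (S'.erase k) (1 : K) S) else 0 := by
      unfold bdT
      rw [Finsupp.lsum_single, LinearMap.toSpanSingleton_apply, Finsupp.smul_apply,
        Finsupp.finsetSum_apply, smul_eq_mul, Finset.mul_sum]
      refine sum_congr rfl fun k _ => ?_
      split_ifs
      · rw [Finsupp.smul_apply, smul_eq_mul]; rfl
      · simp
    rw [e]
    have e1 : Sᶜ = univ.filter (fun k => k ∉ S) := by ext; simp
    have e2 : S' = univ.filter (fun k => k ∈ S') := by ext; simp
    rw [e1, sum_filter]
    conv_lhs => rw [e2, sum_filter]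
    refine sum_congr rfl fun k _ => ?_
    rw [← e2]
    by_cases h : k ∈ S' ∧ S'.erase k = S
    · obtain ⟨h1, h2⟩ := h
      have h3 : k ∉ S := by rw [← h2]; simp
      have h4 : insert k S = S' := by rw [← h2, insert_erase h1]
      rw [if_pos h1, if_pos h3, h4, h2]
      simp only [Finsupp.single_eq_same, mul_one]
      split_ifs
      · ring
      · rfl
    · have hl : (if k ∈ S' then (if mlcm g (S'.erase k) = mlcm g S'
        then c * (sg K S' k * Finsupp.single (S'.erase k) (1 : K) S) else 0) else 0) = 0 := by
        by_cases h1 : k ∈ S'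
        · have h2 : S'.erase k ≠ S := fun h2 => h ⟨h1, h2⟩
          simp [h1, Finsupp.single_apply, h2]
        · simp [h1]
      rw [hl]
      by_cases h1 : k ∉ S
      · have h2 : S' ≠ insert k S := by
          rintro rfl; exact h ⟨by simp, erase_insert h1⟩
        simp [Finsupp.single_apply, h2]
      · simp [h1]

lemma torRank_zero_iff_Ac (p j : ℕ) : torRank K g p j = 0 ↔
    ∀ m : Fin n → ℕ, ∑ x, m x = j → Ac K {S | mlcm g S = m} p := by
  rw [torRank_zero_iff]
  simp only [mem_strand]
  constructor
  · rintro h m hm z hs hz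
    obtain ⟨y, hy1, hy2⟩ := h (Finsupp.equivFunOnFinite.symm z) (by
      intro S hS
      have := hs S hS
      exact ⟨this.2, by rw [show mlcm g S = m from this.1]; exact hm⟩) (by
      ext S
      rw [bdT_apply]
      by_cases hSm : mlcm g S = m
      · have := hz S hSm
        refine Eq.trans ?_ this
        unfold bd
        refine sum_congr rfl fun k _ => ?_
        split_ifs with h1
        · rfl
        · have : z (insert k S) = 0 := by
            by_contra h2
            exact h1 (hSm.trans (hs _ h2).1.symm)
          rw [this, mul_zero]
      · refine sum_eq_zero fun k _ => ?_
        split_ifs with h1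
        · rw [mul_eq_zero]; right
          by_contra h2
          exact hSm (h1.trans (hs _ h2).1)
        · rfl)
    refine ⟨res {S | mlcm g S = m} y, ?_, ?_⟩
    · intro S hS
      have := res_ne hS
      exact ⟨this.1, (hy1 S this.2).1⟩
    · intro S hS
      have h1 := congrArg (fun f => f S) hy2
      simp only [bdT_apply, Finsupp.equivFunOnFinite_symm_apply_apply] at h1
      rw [← h1]
      unfold bd
      refine sum_congr rfl fun k _ => ?_
      have hS' : mlcm g S = m := hS
      unfold res
      by_cases h2 : mlcm g (insert k S) = m
      · rw [if_pos (show insert k S ∈ {S | mlcm g S = m} from h2), if_pos (hS'.trans h2.symm)]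
      · rw [if_neg (show insert k S ∉ {S | mlcm g S = m} from h2), if_neg (fun h3 => h2 (h3.symm.trans hS')), mul_zero]
  · intro h z hs hz
    have H : ∀ m : Fin n → ℕ, ∃ y : Finset (Fin r) → K,
      (∀ S, y S ≠ 0 → mlcm g S = m ∧ S.card = p + 1 ∧ ∑ x, mlcm g S x = j) ∧
        ∀ S, mlcm g S = m → bd y S = z S := by
      intro m
      by_cases hm : ∑ x, m x = j
      · obtain ⟨y, hy1, hy2⟩ := h m hm (res {S | mlcm g S = m} z) (by
          intro S hS
          have := res_ne hS
          exact ⟨this.1, (hs S this.2).1⟩) (by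
          intro S hS
          have hS' : mlcm g S = m := hS
          have h1 := congrArg (fun f => f S) hz
          simp only [bdT_apply, Finsupp.zero_apply] at h1
          rw [← h1]
          unfold bd
          refine sum_congr rfl fun k _ => ?_
          unfold res
          by_cases h2 : mlcm g (insert k S) = m
          · rw [if_pos (show insert k S ∈ {S | mlcm g S = m} from h2), if_pos (hS'.trans h2.symm)]
          · rw [if_neg (show insert k S ∉ {S | mlcm g S = m} from h2), if_neg (fun h3 => h2 (h3.symm.trans hS')), mul_zero])
        refine ⟨y, fun S hS => ?_, fun S hS => ?_⟩
        · obtain ⟨h1, h2⟩ := hy1 S hS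
          have h1' : mlcm g S = m := h1
          exact ⟨h1, h2, by rw [h1']; exact hm⟩
        · rw [hy2 S hS]
          exact if_pos hS
      · refine ⟨0, by simp, fun S hS => ?_⟩
        rw [bd_zero]
        by_contra h1
        apply hm
        rw [← hS]
        exact (hs S (Ne.symm h1)).2
    choose y hy1 hy2 using H
    refine ⟨Finsupp.equivFunOnFinite.symm fun S => y (mlcm g S) S, ?_, ?_⟩
    · intro S hS
      exact (hy1 _ S hS).2
    · ext S
      rw [bdT_apply, ← hy2 (mlcm g S) S rfl]
      unfold bd
      refine sum_congr rfl fun k _ => ?_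
      split_ifs with h1
      · simp only [Finsupp.equivFunOnFinite_symm_apply_apply]
        rw [← h1]
      · have : y (mlcm g S) (insert k S) = 0 := by
          by_contra h2
          exact h1 (hy1 _ _ h2).1.symm
        rw [this, mul_zero]
end taylor

section hochster
variable (K : Type) [Field K]
variable {n : ℕ} (G : SimpleGraph (Fin n))

/-- complements in `W` of independent sets -/
def QW (W : Finset (Fin n)) : Set (Finset (Fin n)) :=
  {A | A ⊆ W ∧ ∀ i ∈ W, ∀ j ∈ W, i ∉ A → j ∉ A → ¬ G.Adj i j}

def ind (W : Finset (Fin n)) : Fin n → ℕ := fun x => if x ∈ W then 1 else 0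

lemma sum_ind (W : Finset (Fin n)) : ∑ x, ind W x = W.card := by
  simp [ind]

lemma eg_le (k) (x) : edgeGens G k x ≤ 1 := by
  unfold edgeGens; split_ifs <;> simp

lemma eg_edge (k) : ∃ i j, G.Adj i j ∧ ∀ x, edgeGens G k x ≠ 0 ↔ x = i ∨ x = j := by
  have h := ((edgeFins G).equivFin.symm k).2
  unfold edgeGens
  generalize ((edgeFins G).equivFin.symm k : Sym2 (Fin n)) = e at *
  induction e using Sym2.ind with
  | _ i j =>
    refine ⟨i, j, ?_, ?_⟩
    · simpa [edgeFins] using h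
    · intro x; simp; tauto

lemma eg_exists (i j) (h : G.Adj i j) : ∃ k, ∀ x, edgeGens G k x ≠ 0 ↔ x = i ∨ x = j := by
  have hm : s(i, j) ∈ edgeFins G := by simpa [edgeFins] using h
  refine ⟨(edgeFins G).equivFin ⟨s(i,j), hm⟩, fun x => ?_⟩
  unfold edgeGens
  simp; tauto

lemma mlcm_zero (S) (x : Fin n) : mlcm (edgeGens G) S x = 0 ↔ ∀ k ∈ S, edgeGens G k x = 0 := by
  unfold mlcm
  rw [← bot_eq_zero, Finset.sup_eq_bot_iff]

lemma mlcm_le (S) (x : Fin n) : mlcm (edgeGens G) S x ≤ 1 := by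
  unfold mlcm
  exact Finset.sup_le fun k _ => eg_le G k x

lemma mlcm_ind (S) : mlcm (edgeGens G) S = ind (univ.filter fun x => mlcm (edgeGens G) S x ≠ 0) := by
  ext x
  have := mlcm_le G S x
  simp only [ind, mem_filter, mem_univ, true_and]
  split_ifs <;> omega

lemma mlcm_eq_ind (S) (W : Finset (Fin n)) : mlcm (edgeGens G) S = ind W ↔
    (∀ k ∈ S, ∀ x, edgeGens G k x ≠ 0 → x ∈ W) ∧ ¬ ∃ x ∈ W, ∀ k ∈ S, edgeGens G k x = 0 := by
  constructor
  · intro h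
    have h' := fun x => congrFun h x
    constructor
    · intro k hk x hx
      by_contra hW
      have := h' x
      simp only [ind, hW, if_false, mlcm_zero] at this
      exact hx (this k hk)
    · rintro ⟨x, hx, h1⟩
      rw [← mlcm_zero, h'] at h1
      simp [ind, hx] at h1
  · rintro ⟨h1, h2⟩
    ext x
    by_cases hx : x ∈ W
    · have h3 : mlcm (edgeGens G) S x ≠ 0 := fun h => h2 ⟨x, hx, (mlcm_zero G S x).1 h⟩
      have := mlcm_le G S x
      simp only [ind, hx, if_true]; omega
    · simp only [ind, hx, if_false]
      rw [mlcm_zero]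
      intro k hk
      by_contra h3
      exact hx (h1 k hk x h3)

lemma hochster (W : Finset (Fin n)) (p : ℕ) :
    Ac K {S | mlcm (edgeGens G) S = ind W} (p+1) ↔ Ac K (QW G W) (p+1) := by
  set r := (edgeFins G).card
  let e1 : Fin r ↪o Fin (r + n) := Fin.castAddOrderEmb n
  let e2 : Fin n ↪o Fin (r + n) := Fin.natAddOrderEmb r
  have hd : ∀ k v, e1 k ≠ e2 v := by
    intro k v h
    have := congrArg Fin.val h
    have hk := k.2
    simp [e1, e2] at this
    omega
  let P : Fin (r+n) → Prop := fun a => ∃ k, e1 k = a ∧ ∀ x, edgeGens G k x ≠ 0 → x ∈ W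
  let Q : Fin (r+n) → Prop := fun a => ∃ v ∈ W, e2 v = a
  let R : Fin (r+n) → Fin (r+n) → Prop := fun a b => ∀ k v, e1 k = a → e2 v = b → edgeGens G k v = 0
  have hPQ : ∀ a, P a → ¬ Q a := by
    rintro a ⟨k, rfl, _⟩ ⟨v, _, h⟩; exact hd k v h.symm
  have P1 : ∀ k, P (e1 k) ↔ ∀ x, edgeGens G k x ≠ 0 → x ∈ W := by
    intro k
    constructor
    · rintro ⟨k', h, h'⟩
      rwa [e1.injective h] at h'
    · intro h; exact ⟨k, rfl, h⟩
  have Q1 : ∀ v, Q (e2 v) ↔ v ∈ W := by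
    intro v
    constructor
    · rintro ⟨v', h, h'⟩
      rwa [e2.injective h'] at h
    · intro h; exact ⟨v, h, rfl⟩
  have R1 : ∀ k v, R (e1 k) (e2 v) ↔ edgeGens G k v = 0 := by
    intro k v
    constructor
    · intro h; exact h k v rfl rfl
    · intro h k' v' h1 h2
      rwa [e1.injective h1, e2.injective h2]
  have img : ∀ {s : ℕ} (e : Fin s ↪o Fin (r+n)) (X : Finset (Fin (r+n))), (∀ a ∈ X, ∃ k, e k = a) →
      ∃ S : Finset (Fin s), X = S.map e.toEmbedding := by
    intro s e X h
    refine ⟨univ.filter fun k => e k ∈ X, ?_⟩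
    ext a
    simp only [mem_map, mem_filter, mem_univ, true_and]
    constructor
    · intro ha
      obtain ⟨k, rfl⟩ := h a ha
      exact ⟨k, ha, rfl⟩
    · rintro ⟨k, hk, rfl⟩; exact hk
  rw [Ac_map e1 _ (TT P Q R), dowker_iff hPQ, ← Ac_map e2 (QW G W)]
  · intro A
    simp only [QW, TT, Set.mem_ofPred_eq, mem_map, flip]
    constructor
    · rintro ⟨h1, h2⟩
      constructor
      · rintro _ ⟨v, hv, rfl⟩; exact (Q1 v).2 (h1 hv)
      · rintro ⟨a, ⟨k, rfl, hk⟩, h4⟩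
        obtain ⟨i, j, hij, hx⟩ := eg_edge G k
        have hA : ∀ v ∈ A, edgeGens G k v = 0 := fun v hv => (R1 k v).1 (h4 _ ⟨v, hv, rfl⟩)
        refine h2 i (hk i ((hx i).2 (Or.inl rfl))) j (hk j ((hx j).2 (Or.inr rfl))) ?_ ?_ hij
        · intro hi; exact (hx i).2 (Or.inl rfl) (hA i hi)
        · intro hi; exact (hx j).2 (Or.inr rfl) (hA j hi)
    · rintro ⟨h1, h2⟩
      refine ⟨fun v hv => (Q1 v).1 (h1 _ ⟨v, hv, rfl⟩), ?_⟩
      intro i hi j hj hiA hjA hij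
      obtain ⟨k, hk⟩ := eg_exists G i j hij
      refine h2 ⟨e1 k, (P1 k).2 ?_, ?_⟩
      · intro x hx
        rcases (hk x).1 hx with rfl | rfl <;> assumption
      · rintro _ ⟨v, hv, rfl⟩
        refine (R1 k v).2 ?_
        by_contra h3
        rcases (hk v).1 h3 with rfl | rfl
        · exact hiA hv
        · exact hjA hv
  · rintro X ⟨h1, _⟩
    refine img e2 X fun a ha => ?_
    obtain ⟨v, _, h⟩ := h1 a ha
    exact ⟨v, h⟩
  · intro S
    rw [Set.mem_ofPred_eq, mlcm_eq_ind]
    simp only [TT, Set.mem_ofPred_eq, mem_map]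
    constructor
    · rintro ⟨h1, h2⟩
      constructor
      · rintro _ ⟨k, hk, rfl⟩; exact (P1 k).2 (h1 k hk)
      · rintro ⟨_, ⟨v, hv, rfl⟩, h4⟩
        exact h2 ⟨v, hv, fun k hk => (R1 k v).1 (h4 _ ⟨k, hk, rfl⟩)⟩
    · rintro ⟨h1, h2⟩
      refine ⟨fun k hk => (P1 k).1 (h1 _ ⟨k, hk, rfl⟩), ?_⟩
      rintro ⟨v, hv, h4⟩
      refine h2 ⟨e2 v, (Q1 v).2 hv, ?_⟩
      rintro _ ⟨k, hk, rfl⟩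
      exact (R1 k v).2 (h4 k hk)
  · rintro X ⟨h1, _⟩
    refine img e1 X fun a ha => ?_
    obtain ⟨v, h, _⟩ := h1 a ha
    exact ⟨v, h⟩

lemma gBetti_ne (W : Finset (Fin n)) (p : ℕ) (h : ¬ Ac K (QW G W) (p+1)) :
    gBetti K G p W.card ≠ 0 := by
  intro h1
  unfold gBetti betti at h1
  rw [torRank_zero_iff_Ac] at h1
  exact h ((hochster K G W p).1 (h1 (ind W) (sum_ind W)))

lemma gBetti_zero (p j : ℕ)
    (h : ∀ W : Finset (Fin n), W.card = j → (∀ x ∈ W, ∃ y, G.Adj x y) → Ac K (QW G W) (p+1)) :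
    gBetti K G p j = 0 := by
  unfold gBetti betti
  rw [torRank_zero_iff_Ac]
  intro m hm
  by_cases hS : ∃ S, mlcm (edgeGens G) S = m
  · obtain ⟨S, hS⟩ := hS
    rw [mlcm_ind] at hS
    set W := univ.filter fun x => mlcm (edgeGens G) S x ≠ 0 with hW
    rw [← hS, hochster]
    apply h
    · rw [← hm, ← hS, sum_ind]
    · intro x hx
      have h1 : mlcm (edgeGens G) S x ≠ 0 := by simpa [hW] using hx
      rw [Ne, mlcm_zero] at h1
      push Not at h1
      obtain ⟨k, _, hk⟩ := h1
      obtain ⟨i, j, hij, h2⟩ := eg_edge G k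
      rcases (h2 x).1 hk with rfl | rfl
      · exact ⟨_, hij⟩
      · exact ⟨_, hij.symm⟩
  · intro z hs hz
    refine ⟨0, by simp, ?_⟩
    intro X hX
    exact absurd ⟨X, hX⟩ hS
end hochster
end EPX
namespace EPX
open Finset EP
section cyc
variable {K : Type} [Field K]
variable {n : ℕ}

lemma bd_sub_W (y : Finset (Fin n) → K) (W X : Finset (Fin n)) (hX : X ⊆ W)
    (hy : ∀ Z, y Z ≠ 0 → Z ⊆ W) :
    bd y X = ∑ a ∈ W \ X, sg K (insert a X) a * y (insert a X) := by
  unfold bd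
  symm
  apply sum_subset
  · intro a ha
    simp only [mem_sdiff] at ha; simpa using ha.2
  · intro a ha ha'
    rw [mul_eq_zero]; right
    by_contra h
    apply ha'
    rw [mem_compl] at ha
    exact mem_sdiff.mpr ⟨hy _ h (mem_insert_self _ _), ha⟩

lemma bd_two (y : Finset (Fin n) → K) (W : Finset (Fin n)) (a b : Fin n)
    (ha : a ∈ W) (hb : b ∈ W) (hab : a ≠ b) (hy : ∀ Z, y Z ≠ 0 → Z ⊆ W) :
    bd y ((W.erase a).erase b) =
      sg K (W.erase b) a * y (W.erase b) + sg K (W.erase a) b * y (W.erase a) := by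
  rw [bd_sub_W y W _ ((erase_subset _ _).trans (erase_subset _ _)) hy]
  have e : W \ ((W.erase a).erase b) = {a, b} := by
    ext x; simp only [mem_sdiff, mem_erase, mem_insert, mem_singleton]
    constructor
    · tauto
    · rintro (rfl | rfl) <;> simp [ha, hb]
  rw [e, sum_pair hab, erase_right_comm, insert_erase (by simp [ha, hab]), erase_right_comm,
    insert_erase (by simp [hb, hab.symm])]

lemma bd_three (y : Finset (Fin n) → K) (W : Finset (Fin n)) (x a b : Fin n)
    (hx : x ∈ W) (ha : a ∈ W) (hb : b ∈ W) (hab : a ≠ b) (hxa : x ≠ a) (hxb : x ≠ b)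
    (hy : ∀ Z, y Z ≠ 0 → Z ⊆ W) :
    bd y (((W.erase x).erase a).erase b) =
      sg K ((W.erase a).erase b) x * y ((W.erase a).erase b) +
      (sg K ((W.erase x).erase b) a * y ((W.erase x).erase b)
        + sg K ((W.erase x).erase a) b * y ((W.erase x).erase a)) := by
  rw [bd_sub_W y W _
    ((erase_subset _ _).trans ((erase_subset _ _).trans (erase_subset _ _))) hy]
  have e : W \ (((W.erase x).erase a).erase b) = {x, a, b} := by
    ext x; simp only [mem_sdiff, mem_erase, mem_insert, mem_singleton]
    constructor
    · tauto
    · rintro (rfl | rfl | rfl) <;> simp [ha, hb, hx]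
  have e1 : insert x (((W.erase x).erase a).erase b) = (W.erase a).erase b := by
    ext z; simp only [mem_erase, mem_insert]
    constructor
    · rintro (rfl | h)
      · exact ⟨hxb, hxa, hx⟩
      · tauto
    · tauto
  have e2 : insert a (((W.erase x).erase a).erase b) = (W.erase x).erase b := by
    rw [erase_right_comm, insert_erase (by simp [ha, hab, hxa.symm])]
  have e3 : insert b (((W.erase x).erase a).erase b) = (W.erase x).erase a := by
    rw [insert_erase (by simp [hb, hab.symm, hxb.symm])]
  rw [e, sum_insert (by simp [hxa, hxb]), sum_pair hab, e1, e2, e3]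

variable {l : ℕ} [NeZero l] (f : ZMod l → Fin n)

variable (K) in
noncomputable def ph (W : Finset (Fin n)) (i : ZMod l) : K :=
  sg K W (f i) * sg K (W.erase (f i)) (f (i+1))

lemma tele (hf : Function.Injective f) (h1 : (1 : ZMod l) ≠ 0) (W : Finset (Fin n))
    (hW : ∀ i, f i ∈ W) (y : Finset (Fin n) → K) :
    ∑ i, ph K f W i * (sg K (W.erase (f (i+1))) (f i) * y (W.erase (f (i+1)))
      + sg K (W.erase (f i)) (f (i+1)) * y (W.erase (f i))) = 0 := by
  have h : ∀ i, ph K f W i * (sg K (W.erase (f (i+1))) (f i) * y (W.erase (f (i+1)))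
      + sg K (W.erase (f i)) (f (i+1)) * y (W.erase (f i))) =
      sg K W (f i) * y (W.erase (f i)) - sg K W (f (i+1)) * y (W.erase (f (i+1))) := by
    intro i
    have hne : f i ≠ f (i+1) := fun h => h1 (by simpa using hf h)
    have s0 := sg_swap K W (f i) (f (i+1)) (hW _) (hW _) hne
    have s1 := sg_sq K (W.erase (f i)) (f (i+1))
    have s2 := sg_sq K (W.erase (f (i+1))) (f i)
    unfold ph
    generalize y (W.erase (f i)) = y0
    generalize y (W.erase (f (i+1))) = y1
    generalize sg K (W.erase (f i)) (f (i+1)) = a at *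
    generalize sg K (W.erase (f (i+1))) (f i) = b at *
    generalize sg K W (f i) = c at *
    generalize sg K W (f (i+1)) = d at *
    linear_combination (b * y1) * s0 + c * y0 * s1 - d * y1 * s2
  rw [sum_congr rfl fun i _ => h i, sum_sub_distrib,
    Equiv.sum_comp (Equiv.addRight (1 : ZMod l)) (fun i => sg K W (f i) * y (W.erase (f i)))
    |> fun h => (by simpa using h : ∑ i, sg K W (f (i+1)) * y (W.erase (f (i+1))) =
      ∑ i, sg K W (f i) * y (W.erase (f i))), sub_self]

lemma zne (l k : ℕ) (hk : 0 < k) (hl : k < l) : ((k : ℕ) : ZMod l) ≠ 0 := by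
  rw [Ne, ZMod.natCast_eq_zero_iff]
  intro h; exact absurd (Nat.le_of_dvd hk h) (by omega)

lemma pair_inj (hf : Function.Injective f) (hl : 3 < l) (W : Finset (Fin n)) (hW : ∀ i, f i ∈ W)
    (i j : ZMod l) (h : (W.erase (f i)).erase (f (i+1)) = (W.erase (f j)).erase (f (j+1))) :
    i = j := by
  have h1 := zne l 1 (by omega) (by omega)
  have h2 := zne l 2 (by omega) (by omega)
  push_cast at h1 h2
  have a1 : f i ∉ (W.erase (f j)).erase (f (j+1)) := by rw [← h]; simp
  have a2 : f (i+1) ∉ (W.erase (f j)).erase (f (j+1)) := by rw [← h]; simp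
  simp only [mem_erase, hW, and_true, not_and_or, not_not, ne_eq, hf.eq_iff, not_true] at a1 a2
  rcases a1 with a1 | a1
  · subst a1
    rcases a2 with a2 | a2
    · exfalso; exact h1 (by linear_combination a2)
    · exfalso; exact h2 (by linear_combination a2)
  · exact a1

variable (G : SimpleGraph (Fin n))

lemma nonAc1 (hf : Function.Injective f) (hl : 3 < l)
    (hc : ∀ i j : ZMod l, Gᶜ.Adj (f i) (f j) ↔ (j = i + 1 ∨ i = j + 1))
    (W : Finset (Fin n)) (hW : ∀ i, f i ∈ W) (i0 : ZMod l)
    (hfac : ∀ a ∈ W, a ≠ f i0 → a ≠ f (i0+1) → G.Adj a (f i0) ∨ G.Adj a (f (i0+1)))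
    (p : ℕ) (hp : p + 3 = W.card) : ¬ Ac K (QW G W) (p+1) := by
  have h1 := zne l 1 (by omega) (by omega)
  push_cast at h1
  have hne : ∀ i, f i ≠ f (i+1) := fun i h => h1 (by simpa using hf h)
  have hnadj : ∀ i, ¬ G.Adj (f i) (f (i+1)) := fun i => by
    have := (hc i (i+1)).2 (Or.inl rfl)
    rw [SimpleGraph.compl_adj] at this
    exact this.2
  let X : ZMod l → Finset (Fin n) := fun i => (W.erase (f i)).erase (f (i+1))
  have hXQ : ∀ i, X i ∈ QW G W := by
    intro i
    refine ⟨(erase_subset _ _).trans (erase_subset _ _), ?_⟩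
    intro a ha b hb ha' hb' hab
    simp only [X, mem_erase, ha, hb, and_true, not_and_or, not_not, ne_eq] at ha' hb'
    rcases ha' with rfl | rfl <;> rcases hb' with rfl | rfl
    · exact G.loopless.irrefl _ hab
    · exact hnadj i hab.symm
    · exact hnadj i hab
    · exact G.loopless.irrefl _ hab
  have hXc : ∀ i, (X i).card = p + 1 := by
    intro i
    simp only [X]
    rw [card_erase_of_mem (by simp [hW, (hne i).symm]), card_erase_of_mem (hW i)]
    omega
  intro hAc
  obtain ⟨y, hy1, hy2⟩ := hAc (Pi.single (X i0) 1) (by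
    intro Y hY
    have : Y = X i0 := by
      by_contra h; exact hY (Pi.single_eq_of_ne h 1)
    rw [this]; exact ⟨hXQ i0, hXc i0⟩) (by
    intro Y hY
    by_contra h
    obtain ⟨a, ha, h2⟩ := bd_ne h
    have h3 : insert a Y = X i0 := by
      by_contra h; exact h2 (Pi.single_eq_of_ne h 1)
    have haX : a ∈ X i0 := by rw [← h3]; simp
    have hYX : Y ⊆ X i0 := by rw [← h3]; simp
    simp only [X, mem_erase] at haX
    have n1 : f i0 ∉ Y := fun h => by have := hYX h; simp [X] at this
    have n2 : f (i0+1) ∉ Y := fun h => by have := hYX h; simp [X] at this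
    rcases hfac a haX.2.2 haX.2.1 haX.1 with h4 | h4
    · exact hY.2 a haX.2.2 _ (hW i0) ha n1 h4
    · exact hY.2 a haX.2.2 _ (hW (i0+1)) ha n2 h4)
  have hys : ∀ Z, y Z ≠ 0 → Z ⊆ W := fun Z hZ => (hy1 Z hZ).1.1
  have T := tele f hf h1 W hW y
  have e : ∀ i, sg K (W.erase (f (i+1))) (f i) * y (W.erase (f (i+1)))
      + sg K (W.erase (f i)) (f (i+1)) * y (W.erase (f i)) = (Pi.single (X i0) 1 : Finset (Fin n) → K) (X i) := by
    intro i
    rw [← hy2 (X i) (hXQ i), bd_two y W (f i) (f (i+1)) (hW _) (hW _) (hne i) hys]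
  rw [sum_congr rfl fun i _ => by rw [e i], Finset.sum_eq_single i0] at T
  · rw [Pi.single_eq_same, mul_one] at T
    exact mul_ne_zero (sg_ne K _ _) (sg_ne K _ _) T
  · intro i _ hi
    rw [Pi.single_eq_of_ne, mul_zero]
    intro h; exact hi (pair_inj f hf hl W hW i i0 h)
  · simp

lemma nonAc2 (hf : Function.Injective f) (hl : 3 < l)
    (hc : ∀ i j : ZMod l, Gᶜ.Adj (f i) (f j) ↔ (j = i + 1 ∨ i = j + 1))
    (W : Finset (Fin n)) (hW : ∀ i, f i ∈ W) (v v' : Fin n) (hv : v ∈ W) (hv' : v' ∈ W)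
    (hvf : ∀ i, f i ≠ v) (hvf' : ∀ i, f i ≠ v') (hvv : G.Adj v v')
    (hva : ∀ i, ¬ G.Adj v (f i)) (hva' : ∀ i, ¬ G.Adj v' (f i))
    (hWs : ∀ a ∈ W, a = v ∨ a = v' ∨ ∃ i, a = f i)
    (p : ℕ) (hp : p + 4 = W.card) : ¬ Ac K (QW G W) (p+1) := by
  have h1 := zne l 1 (by omega) (by omega)
  have h2 := zne l 2 (by omega) (by omega)
  have h3 := zne l 3 (by omega) (by omega)
  push_cast at h1 h2 h3
  have hne : ∀ i, f i ≠ f (i+1) := fun i h => h1 (by simpa using hf h)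
  have hnadj : ∀ i, ¬ G.Adj (f i) (f (i+1)) := fun i => by
    have := (hc i (i+1)).2 (Or.inl rfl)
    rw [SimpleGraph.compl_adj] at this
    exact this.2
  let X : Fin n → ZMod l → Finset (Fin n) := fun x i => ((W.erase x).erase (f i)).erase (f (i+1))
  have hXQ : ∀ x i, (∀ i, ¬ G.Adj x (f i)) → X x i ∈ QW G W := by
    intro x i hx
    refine ⟨(erase_subset _ _).trans ((erase_subset _ _).trans (erase_subset _ _)), ?_⟩
    intro a ha b hb ha' hb' hab
    simp only [X, mem_erase, ha, hb, and_true, not_and_or, not_not, ne_eq] at ha' hb'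
    rcases ha' with rfl | rfl | rfl <;> rcases hb' with rfl | rfl | rfl
    · exact G.loopless.irrefl _ hab
    · exact hnadj i hab.symm
    · exact hx _ hab.symm
    · exact hnadj i hab
    · exact G.loopless.irrefl _ hab
    · exact hx _ hab.symm
    · exact hx _ hab
    · exact hx _ hab
    · exact G.loopless.irrefl _ hab
  have hXc : ∀ i, (X v i).card = p + 1 := by
    intro i
    simp only [X]
    rw [card_erase_of_mem (by simp [hW, (hne i).symm, hvf]), card_erase_of_mem (by simp [hW, hvf]),
      card_erase_of_mem hv]
    omega
  intro hAc
  obtain ⟨y, hy1, hy2⟩ := hAc (Pi.single (X v 0) 1) (by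
    intro Y hY
    have : Y = X v 0 := by
      by_contra h; exact hY (Pi.single_eq_of_ne h 1)
    rw [this]; exact ⟨hXQ v 0 hva, hXc 0⟩) (by
    intro Y hY
    by_contra h
    obtain ⟨a, ha, h4⟩ := bd_ne h
    have h5 : insert a Y = X v 0 := by
      by_contra h; exact h4 (Pi.single_eq_of_ne h 1)
    have haX : a ∈ X v 0 := by rw [← h5]; simp
    have hYX : Y ⊆ X v 0 := by rw [← h5]; simp
    simp only [X, mem_erase] at haX
    obtain ⟨b1, b2, b3, haW⟩ := haX
    have n1 : f 0 ∉ Y := fun h => by have := hYX h; simp [X] at this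
    have n2 : f (0+1) ∉ Y := fun h => by have := hYX h; simp [X] at this
    have n3 : v ∉ Y := fun h => by have := hYX h; simp [X] at this
    rcases hWs a haW with rfl | rfl | ⟨i, rfl⟩
    · exact b3 rfl
    · exact hY.2 v hv _ haW n3 ha hvv
    · have c1 := hY.2 (f i) haW _ (hW 0) ha n1
      have c2 := hY.2 (f i) haW _ (hW (0+1)) ha n2
      have d1 := (hc i 0).1 ((SimpleGraph.compl_adj _ _ _).2 ⟨b2, c1⟩)
      have d2 := (hc i (0+1)).1 ((SimpleGraph.compl_adj _ _ _).2 ⟨b1, c2⟩)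
      rcases d1 with d1 | d1 <;> rcases d2 with d2 | d2
      · exact h1 (by linear_combination d2 - d1)
      · exact h3 (by linear_combination -d1 - d2)
      · exact b1 (by rw [d1])
      · exact h1 (by linear_combination d1 - d2))
  have hys : ∀ Z, y Z ≠ 0 → Z ⊆ W := fun Z hZ => (hy1 Z hZ).1.1
  have key : ∀ x ∈ W, (∀ i, f i ≠ x) → (∀ i, ¬ G.Adj x (f i)) →
      ∑ i, sg K W x * (ph K f (W.erase x) i * (Pi.single (X v 0) 1 : Finset (Fin n) → K) (X x i)) =
      ∑ i, ph K f W i * y ((W.erase (f i)).erase (f (i+1))) := by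
    intro x hx hxf hxa
    have T := tele f hf h1 (W.erase x) (fun i => by simp [hW, hxf]) y
    have e : ∀ i, sg K W x * (ph K f (W.erase x) i * (Pi.single (X v 0) 1 : Finset (Fin n) → K) (X x i))
       = ph K f W i * y ((W.erase (f i)).erase (f (i+1))) + sg K W x * (ph K f (W.erase x) i *
       (sg K ((W.erase x).erase (f (i+1))) (f i) * y ((W.erase x).erase (f (i+1)))
      + sg K ((W.erase x).erase (f i)) (f (i+1)) * y ((W.erase x).erase (f i)))) := by
      intro i
      rw [← hy2 (X x i) (hXQ x i hxa), bd_three y W x (f i) (f (i+1)) hx (hW _) (hW _) (hne i)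
        (hxf _).symm (hxf _).symm hys]
      have q1 := sg_swap K W x (f i) hx (hW i) (hxf i).symm
      have q2 := sg_swap K (W.erase (f i)) x (f (i+1)) (by simp [hx, (hxf i).symm])
        (by simp [hW, (hne i).symm]) (hxf _).symm
      have q3 := sg_sq K ((W.erase (f i)).erase (f (i+1))) x
      rw [erase_right_comm] at q2
      have q : sg K W x * (ph K f (W.erase x) i * sg K ((W.erase (f i)).erase (f (i+1))) x)
        = ph K f W i := by
        unfold ph
        generalize sg K ((W.erase (f i)).erase (f (i+1))) x = a1 at *
        generalize sg K ((W.erase x).erase (f i)) (f (i+1)) = a2 at *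
        generalize sg K (W.erase x) (f i) = a3 at *
        generalize sg K (W.erase (f i)) x = a4 at *
        generalize sg K (W.erase (f i)) (f (i+1)) = a5 at *
        generalize sg K W x = a6 at *
        generalize sg K W (f i) = a7 at *
        linear_combination (a2 * a1) * q1 - a7 * a1 * q2 + a7 * a5 * q3
      rw [← q]; ring
    rw [sum_congr rfl fun i _ => e i, sum_add_distrib, ← Finset.mul_sum, T, mul_zero, add_zero]
  have k1 := key v hv hvf hva
  rw [← key v' hv' hvf' hva'] at k1
  rw [Finset.sum_eq_single 0] at k1
  · rw [Finset.sum_eq_zero (s := univ) (f := fun i => sg K W v' * (ph K f (W.erase v') i *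
      (Pi.single (X v 0) 1 : Finset (Fin n) → K) (X v' i)))] at k1
    · rw [Pi.single_eq_same, mul_one] at k1
      exact mul_ne_zero (sg_ne K _ _) (mul_ne_zero (sg_ne K _ _) (sg_ne K _ _)) k1
    · intro i _
      rw [Pi.single_eq_of_ne, mul_zero, mul_zero]
      intro h
      have : v ∈ X v' i := by simp [X, hv, (hvf _).symm, hvv.ne]
      rw [h] at this
      simp [X] at this
  · intro i _ hi
    rw [Pi.single_eq_of_ne, mul_zero, mul_zero]
    intro h; exact hi (pair_inj f hf hl (W.erase v) (fun i => by simp [hW, hvf]) i 0 h)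
  · simp

lemma ac_cycle (hf : Function.Injective f) (hl : 3 < l)
    (hc : ∀ i j : ZMod l, Gᶜ.Adj (f i) (f j) ↔ (j = i + 1 ∨ i = j + 1))
    (W : Finset (Fin n)) (hWs : ∀ a ∈ W, ∃ i, a = f i)
    (p : ℕ) (hp : p + 3 = W.card) : Ac K (QW G W) p := by
  have h1 := zne l 1 (by omega) (by omega)
  have h3 := zne l 3 (by omega) (by omega)
  push_cast at h1 h3
  intro z hs _
  have hz : z = 0 := by
    ext A
    by_contra h
    obtain ⟨⟨hA, hA2⟩, hAc⟩ := hs A h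
    have hcard : (W \ A).card = 3 := by
      rw [card_sdiff_of_subset hA]; omega
    obtain ⟨a, b, c, hab, hac, hbc, habc⟩ := card_eq_three.mp hcard
    have m : ∀ x, x = a ∨ x = b ∨ x = c → x ∈ W ∧ x ∉ A := by
      intro x hx
      rw [← mem_sdiff, habc]; simpa using hx
    obtain ⟨ma, ma'⟩ := m a (by simp)
    obtain ⟨mb, mb'⟩ := m b (by simp)
    obtain ⟨mc, mc'⟩ := m c (by simp)
    obtain ⟨i, rfl⟩ := hWs a ma
    obtain ⟨j, rfl⟩ := hWs b mb
    obtain ⟨k, rfl⟩ := hWs c mc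
    have d1 := (hc i j).1 ((SimpleGraph.compl_adj _ _ _).2 ⟨hab, hA2 _ ma _ mb ma' mb'⟩)
    have d2 := (hc j k).1 ((SimpleGraph.compl_adj _ _ _).2 ⟨hbc, hA2 _ mb _ mc mb' mc'⟩)
    have d3 := (hc i k).1 ((SimpleGraph.compl_adj _ _ _).2 ⟨hac, hA2 _ ma _ mc ma' mc'⟩)
    rcases d1 with d1 | d1 <;> rcases d2 with d2 | d2 <;> rcases d3 with d3 | d3
    · exact h1 (by linear_combination d3 - d2 - d1)
    · exact h3 (by linear_combination -d1 - d2 - d3)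
    · exact h1 (by linear_combination d1 - d2 - d3)
    · exact h1 (by linear_combination d2 - d1 - d3)
    · exact h1 (by linear_combination d2 - d1 - d3)
    · exact h1 (by linear_combination d1 - d2 - d3)
    · exact h3 (by linear_combination -d1 - d2 - d3)
    · exact h1 (by linear_combination d3 - d1 - d2)
  refine ⟨0, by simp, ?_⟩
  intro X _
  rw [bd_zero, hz]

lemma ac_path (hf : Function.Injective f) (hl : 3 < l)
    (hc : ∀ i j : ZMod l, Gᶜ.Adj (f i) (f j) ↔ (j = i + 1 ∨ i = j + 1))
    (W : Finset (Fin n)) (i0 : ZMod l) (hWs : ∀ a, a ∈ W ↔ ∃ i, i ≠ i0 ∧ a = f i)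
    (p : ℕ) (hp : p + 2 = W.card) : Ac K (QW G W) p := by
  let c : ℕ → Fin n := fun k => f (i0 + 1 + (k : ZMod l))
  have cinj : ∀ a b, a < l → b < l → c a = c b → a = b := by
    intro a b ha hb h
    have := hf h
    have h' : ((a : ℕ) : ZMod l) = (b : ℕ) := by linear_combination this
    rw [ZMod.natCast_eq_natCast_iff'] at h'
    rwa [Nat.mod_eq_of_lt ha, Nat.mod_eq_of_lt hb] at h'
  have cW : ∀ a, a + 1 < l → c a ∈ W := by
    intro a ha
    rw [hWs]
    refine ⟨_, ?_, rfl⟩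
    intro h
    exact zne l (a+1) (by omega) ha (by push_cast; linear_combination h)
  have Wc : ∀ x ∈ W, ∃ a, a + 1 < l ∧ x = c a := by
    intro x hx
    obtain ⟨i, hi, rfl⟩ := (hWs x).1 hx
    refine ⟨(i - i0 - 1).val, ?_, ?_⟩
    · have := ZMod.val_lt (i - i0 - 1)
      by_contra h
      have e : (i - i0 - 1).val + 1 = l := by omega
      have e2 : (((i - i0 - 1).val + 1 : ℕ) : ZMod l) = 0 := by rw [e]; simp
      push_cast at e2
      rw [ZMod.natCast_zmod_val] at e2
      exact hi (by linear_combination e2)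
    · simp only [c]
      rw [ZMod.natCast_zmod_val]; congr 1; ring
  intro z hs _
  let U : ℕ → K := fun k => ∑ i ∈ range k, (sg K W (c i) * sg K (W.erase (c i)) (c (i+1))) *
    z ((W.erase (c i)).erase (c (i+1)))
  let y : Finset (Fin n) → K := fun Y => ∑ k ∈ range (l-1),
    if Y = W.erase (c k) then -(sg K W (c k)) * U k else 0
  have hy : ∀ k, k + 1 < l → y (W.erase (c k)) = -(sg K W (c k)) * U k := by
    intro k hk
    simp only [y]
    rw [Finset.sum_eq_single k]
    · simp
    · intro b hb hbk
      rw [if_neg]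
      intro h
      have : c k ∉ W.erase (c b) := by rw [← h]; simp
      rw [mem_erase, not_and_or, not_not] at this
      rw [mem_range] at hb
      rcases this with h1 | h1
      · exact hbk (cinj _ _ (by omega) (by omega) h1).symm
      · exact h1 (cW k hk)
    · intro h; exact absurd (mem_range.mpr (by omega)) h
  have hy1 : ∀ Y, y Y ≠ 0 → Y ∈ QW G W ∧ Y.card = p + 1 := by
    intro Y hY
    obtain ⟨k, hk, h⟩ := exists_ne_zero_of_sum_ne_zero hY
    rw [mem_range] at hk
    have hYk : Y = W.erase (c k) := by
      by_contra h'; rw [if_neg h'] at h; exact h rfl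
    subst hYk
    refine ⟨⟨erase_subset _ _, ?_⟩, ?_⟩
    · intro a ha b hb ha' hb' hab
      simp only [mem_erase, ha, hb, and_true, not_not, ne_eq] at ha' hb'
      rw [ha', hb'] at hab
      exact G.loopless.irrefl _ hab
    · rw [card_erase_of_mem (cW k (by omega))]; omega
  refine ⟨y, hy1, ?_⟩
  intro X hX
  by_cases hXc : X.card = p
  · have step : ∀ a, a + 2 < l → bd y ((W.erase (c a)).erase (c (a+1))) =
        z ((W.erase (c a)).erase (c (a+1))) := by
      intro a ha
      have hne : c a ≠ c (a+1) := fun h => by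
        have := cinj a (a+1) (by omega) (by omega) h; omega
      rw [bd_two y W (c a) (c (a+1)) (cW a (by omega)) (cW (a+1) (by omega)) hne
        (fun Z hZ => (hy1 Z hZ).1.1), hy a (by omega), hy (a+1) (by omega)]
      have hU : U (a+1) = U a + (sg K W (c a) * sg K (W.erase (c a)) (c (a+1))) *
        z ((W.erase (c a)).erase (c (a+1))) := sum_range_succ _ _
      rw [hU]
      have s0 := sg_swap K W (c a) (c (a+1)) (cW a (by omega)) (cW (a+1) (by omega)) hne
      have s1 := sg_sq K (W.erase (c a)) (c (a+1))
      have s2 := sg_sq K W (c a)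
      generalize z ((W.erase (c a)).erase (c (a+1))) = z0
      generalize U a = u
      generalize sg K (W.erase (c a)) (c (a+1)) = s at *
      generalize sg K (W.erase (c (a+1))) (c a) = s' at *
      generalize sg K W (c a) = e at *
      generalize sg K W (c (a+1)) = e' at *
      linear_combination (-(u + e * s * z0)) * s0 + e * e * z0 * s1 + z0 * s2
    have hcard : (W \ X).card = 2 := by
      rw [card_sdiff_of_subset hX.1]; omega
    obtain ⟨u, v, huv, hWX⟩ := card_eq_two.mp hcard
    have hXe : X = (W.erase u).erase v := by
      ext x
      have h1 : x ∈ W \ X ↔ x ∈ ({u, v} : Finset (Fin n)) := by rw [hWX]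
      have h2 := @hX.1 x
      simp only [mem_sdiff, mem_insert, mem_singleton, mem_erase] at h1 ⊢
      tauto
    have m : ∀ x, x = u ∨ x = v → x ∈ W ∧ x ∉ X := by
      intro x hx
      rw [← mem_sdiff, hWX]; simpa using hx
    obtain ⟨mu, mu'⟩ := m u (by simp)
    obtain ⟨mv, mv'⟩ := m v (by simp)
    have had : Gᶜ.Adj u v := (SimpleGraph.compl_adj _ _ _).2 ⟨huv, hX.2 _ mu _ mv mu' mv'⟩
    obtain ⟨a, ha, rfl⟩ := Wc u mu
    obtain ⟨b, hb, rfl⟩ := Wc v mv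
    have suc : ∀ a b : ℕ, a + 1 < l → b + 1 < l →
        i0 + 1 + ((b : ℕ) : ZMod l) = i0 + 1 + ((a : ℕ) : ZMod l) + 1 → b = a + 1 := by
      intro a b ha hb h
      have h' : ((b : ℕ) : ZMod l) = ((a + 1 : ℕ) : ZMod l) := by push_cast; linear_combination h
      rw [ZMod.natCast_eq_natCast_iff'] at h'
      rwa [Nat.mod_eq_of_lt (by omega), Nat.mod_eq_of_lt ha] at h'
    rcases (hc _ _).1 had with h | h
    · obtain rfl := suc a b ha hb h
      rw [hXe]; exact step a (by omega)
    · obtain rfl := suc b a hb ha h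
      rw [hXe, erase_right_comm]; exact step b (by omega)
  · have e1 : z X = 0 := by
      by_contra h; exact hXc (hs X h).2
    rw [e1]
    by_contra h
    obtain ⟨a, ha, h2⟩ := bd_ne h
    have := (hy1 _ h2).2
    rw [card_insert_of_notMem ha] at this
    omega

lemma le_gPd (K : Type) [Field K] (i j : ℕ) (h : gBetti K G i j ≠ 0) : i ≤ gPd K G := by
  unfold gPd
  refine le_csSup ⟨(edgeFins G).card, ?_⟩ ⟨j, h⟩
  rintro i ⟨j, h⟩
  by_contra hi
  apply h
  unfold gBetti betti
  rw [torRank_zero_iff]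
  intro z hz _
  refine ⟨0, Submodule.zero_mem _, ?_⟩
  rw [map_zero]
  ext S
  by_contra h1
  have := ((mem_strand K _ _ _ z).1 hz S (Ne.symm h1)).1
  have h2 := card_le_univ S
  rw [Fintype.card_fin] at h2
  omega
end cyc

lemma main (K : Type) [Field K] (n : ℕ) (G : SimpleGraph (Fin n))
    (h : EP.AMFI K G) (l : ℕ) (hl : 3 < l) (hc : EP.HasInducedCycle Gᶜ l) :
    (l : ℕ∞) = EP.gIndex K G + 3 := by
  haveI : NeZero l := ⟨by omega⟩
  obtain ⟨f, hf, hc⟩ := hc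
  unfold AMFI at h
  have hfin : gIndex K G ≠ ⊤ := by
    intro h'; rw [h'] at h; simp at h
  obtain ⟨t, ht⟩ := ENat.ne_top_iff_exists.mp hfin
  rw [← ht] at h ⊢
  have hpd : t + 1 = gPd K G := by exact_mod_cast h
  set C : Finset (Fin n) := univ.image f with hC
  have hCc : C.card = l := by
    rw [hC, card_image_of_injective _ hf, card_univ, ZMod.card]
  have hCf : ∀ i, f i ∈ C := fun i => by simp [hC]
  have hCs : ∀ a ∈ C, ∃ i, a = f i := fun a ha => by
    obtain ⟨i, _, h⟩ := mem_image.mp ha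
    exact ⟨i, h.symm⟩
  have h1 := zne l 1 (by omega) (by omega)
  have h3 := zne l 3 (by omega) (by omega)
  push_cast at h1 h3
  -- edges of the cycle are facets within the cycle
  have hfacC : ∀ i j, f j ≠ f i → f j ≠ f (i+1) → G.Adj (f j) (f i) ∨ G.Adj (f j) (f (i+1)) := by
    intro i j b2 b1
    by_contra hcon
    rw [not_or] at hcon
    have d1 := (hc j i).1 ((SimpleGraph.compl_adj _ _ _).2 ⟨b2, hcon.1⟩)
    have d2 := (hc j (i+1)).1 ((SimpleGraph.compl_adj _ _ _).2 ⟨b1, hcon.2⟩)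
    rcases d1 with d1 | d1 <;> rcases d2 with d2 | d2
    · exact h1 (by linear_combination d2 - d1)
    · exact h3 (by linear_combination -d1 - d2)
    · exact b1 (by rw [d1])
    · exact h1 (by linear_combination d1 - d2)
  have B1 : gBetti K G (l-3) l ≠ 0 := by
    have := gBetti_ne K G C (l-3) (nonAc1 f G hf hl hc C hCf 0 (by
      intro a ha
      obtain ⟨j, rfl⟩ := hCs a ha
      exact hfacC 0 j) (l-3) (by omega))
    rwa [hCc] at this
  have l1 := le_gPd G K _ _ B1
  have l2 : t ≤ l - 3 := by
    have : gIndex K G ≤ ((l - 3 : ℕ) : ℕ∞) := sInf_le ⟨l-3, l, rfl, by omega, B1⟩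
    rw [← ht] at this
    exact_mod_cast this
  by_cases hlt : l = t + 3
  · rw [hlt]; push_cast; rfl
  exfalso
  have hlt' : l = t + 4 := by omega
  have A1 : ∀ v, v ∉ C → ∀ i, ¬ G.Adj v (f i) := by
    intro v hv i hvi
    have hcard : (insert v C).card = l + 1 := by rw [card_insert_of_notMem hv, hCc]
    have := gBetti_ne K G (insert v C) (l-2) (nonAc1 f G hf hl hc (insert v C)
      (fun i => by simp [hCf]) i (by
      intro a ha
      rcases mem_insert.mp ha with rfl | ha
      · intro _ _; exact Or.inl hvi
      obtain ⟨j, rfl⟩ := hCs a ha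
      exact hfacC i j) (l-2) (by omega))
    have := le_gPd G K _ _ this
    omega
  have A2 : ∀ v v', v ∉ C → v' ∉ C → ¬ G.Adj v v' := by
    intro v v' hv hv' hvv
    have hcard : (insert v (insert v' C)).card = l + 2 := by
      rw [card_insert_of_notMem (by simp [hv, hvv.ne]), card_insert_of_notMem hv', hCc]
    have := gBetti_ne K G (insert v (insert v' C)) (l-2) (nonAc2 f G hf hl hc _
      (fun i => by simp [hCf]) v v' (by simp) (by simp) (fun i h => hv (h ▸ hCf i))
      (fun i h => hv' (h ▸ hCf i)) hvv (A1 v hv) (A1 v' hv') (by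
      intro a ha
      rcases mem_insert.mp ha with rfl | ha
      · exact Or.inl rfl
      rcases mem_insert.mp ha with rfl | ha
      · exact Or.inr (Or.inl rfl)
      exact Or.inr (Or.inr (hCs a ha))) (l-2) (by omega))
    have := le_gPd G K _ _ this
    omega
  have A3 : ∀ v w, G.Adj v w → v ∈ C := by
    intro v w hvw
    by_contra hv
    by_cases hw : w ∈ C
    · obtain ⟨i, rfl⟩ := hCs w hw
      exact A1 v hv i hvw
    · exact A2 v w hv hw hvw
  have hmem : gIndex K G ∈ {N : ℕ∞ | ∃ i j : ℕ, N = (i : ℕ∞) ∧ i + 2 < j ∧ gBetti K G i j ≠ 0} := by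
    apply csInf_mem
    exact ⟨_, l-3, l, rfl, by omega, B1⟩
  obtain ⟨i, j, hi, hij, hb⟩ := hmem
  rw [← ht] at hi
  have hi' : t = i := by exact_mod_cast hi
  subst hi'
  apply hb
  apply gBetti_zero
  intro W hWj hWadj
  have hWC : W ⊆ C := by
    intro x hx
    obtain ⟨y, hy⟩ := hWadj x hx
    exact A3 x y hy
  have hle := card_le_card hWC
  by_cases hWl : W.card = l
  · exact ac_cycle f G hf hl hc W (fun a ha => hCs a (hWC ha)) _ (by omega)
  · have hcard : (C \ W).card = 1 := by
      rw [card_sdiff_of_subset hWC]; omega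
    obtain ⟨x, hx⟩ := card_eq_one.mp hcard
    have hxm : ∀ a, a ∈ C ∧ a ∉ W ↔ a = x := by
      intro a; rw [← mem_sdiff, hx, mem_singleton]
    obtain ⟨i0, rfl⟩ := hCs x ((hxm x).2 rfl).1
    refine ac_path f G hf hl hc W i0 ?_ _ (by omega)
    intro a
    constructor
    · intro ha
      obtain ⟨i, rfl⟩ := hCs a (hWC ha)
      refine ⟨i, ?_, rfl⟩
      rintro rfl
      exact ((hxm _).2 rfl).2 ha
    · rintro ⟨i, hi, rfl⟩
      by_contra hW
      exact hi (hf ((hxm (f i)).1 ⟨hCf i, hW⟩))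

end EPX

/-- If the edge ideal `I(G)` has almost maximal finite index, then every
induced cycle of length greater than `3` in the complement of `G` has length exactly
`index(I(G)) + 3`. -/
theorem statement6 (K : Type) [Field K] (n : ℕ) (G : SimpleGraph (Fin n))
    (h : EP.AMFI K G) (l : ℕ) (hl : 3 < l) (hc : EP.HasInducedCycle Gᶜ l) :
    (l : ℕ∞) = EP.gIndex K G + 3 := by
  exact EPX.main K n G h l hl hc
end

section
/- Let G be a simple graph on [n] whose edge ideal I = I(G) has almost maximal finite index, and let C be an induced cycle of length > 3 in the complement graph Ḡ. Then every vertex in [n] \ V(C) is adjacent in Ḡ to some vertex of C. -/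
open Finsupp

namespace EPX

section alg
variable {K : Type} [Field K] {E : Type}

abbrev Lam (K : Type) [Field K] (E : Type) := ExteriorAlgebra K (E →₀ K)

noncomputable def gen (e : E) : Lam K E := ExteriorAlgebra.ι K (Finsupp.single e 1)

noncomputable def con (d : Module.Dual K (E →₀ K)) : Lam K E →ₗ[K] Lam K E :=
  CliffordAlgebra.contractLeft (Q := (0 : QuadraticForm K (E →₀ K))) d

theorem con_gen_mul (d : Module.Dual K (E →₀ K)) (e : E) (x : Lam K E) :
    con d (gen e * x) = d (Finsupp.single e 1) • x - gen e * con d x :=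
  CliffordAlgebra.contractLeft_ι_mul d _ x

theorem con_ι_mul (d : Module.Dual K (E →₀ K)) (e : E →₀ K) (x : Lam K E) :
    con d (ExteriorAlgebra.ι K e * x) = d e • x - ExteriorAlgebra.ι K e * con d x :=
  CliffordAlgebra.contractLeft_ι_mul d _ x

theorem con_algebraMap (d : Module.Dual K (E →₀ K)) (r : K) :
    con d (algebraMap K (Lam K E) r) = 0 :=
  CliffordAlgebra.contractLeft_algebraMap _ d r

theorem con_one (d : Module.Dual K (E →₀ K)) :
    con d (1 : Lam K E) = 0 :=
  CliffordAlgebra.contractLeft_one _ d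

theorem con_con (d : Module.Dual K (E →₀ K)) (x : Lam K E) : con d (con d x) = 0 :=
  CliffordAlgebra.contractLeft_contractLeft d x

theorem con_comm (d d' : Module.Dual K (E →₀ K)) (x : Lam K E) :
    con d (con d' x) = - con d' (con d x) :=
  CliffordAlgebra.contractLeft_comm d d' x

theorem gen_swap (a b : E) (x : Lam K E) : gen a * (gen b * x) = - (gen b * (gen a * x)) := by
  have := ExteriorAlgebra.ι_add_mul_swap (R := K) (Finsupp.single a (1:K)) (Finsupp.single b 1)
  rw [← mul_assoc, ← mul_assoc, ← neg_mul]
  congr 1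
  exact eq_neg_of_add_eq_zero_left this

theorem gen_sq (a : E) (x : Lam K E) : gen a * (gen a * x) = 0 := by
  have := ExteriorAlgebra.ι_sq_zero (R := K) (Finsupp.single a (1:K))
  rw [← mul_assoc, gen, this, zero_mul]

noncomputable def lam : Module.Dual K (E →₀ K) := Finsupp.linearCombination K (fun _ => (1:K))

@[simp] theorem lam_single (e : E) : (lam : Module.Dual K (E →₀ K)) (Finsupp.single e 1) = 1 := by
  simp [lam]

noncomputable def dl (f : E) : Module.Dual K (E →₀ K) := Finsupp.lapply f

theorem dl_self (f : E) : (dl f : Module.Dual K (E →₀ K)) (Finsupp.single f 1) = 1 := by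
  simp [dl]

theorem dl_ne (f e : E) (h : e ≠ f) : (dl f : Module.Dual K (E →₀ K)) (Finsupp.single e 1) = 0 := by
  simp [dl, h]

/-- product of generators -/
noncomputable def mp (L : List E) : Lam K E := (L.map gen).prod

theorem mp_nil : (mp [] : Lam K E) = 1 := rfl
theorem mp_cons (e : E) (L : List E) : (mp (e :: L) : Lam K E) = gen e * mp L := by
  simp [mp]

theorem mp_perm {L L' : List E} (h : L.Perm L') : (mp L : Lam K E) = mp L' ∨ (mp L : Lam K E) = - mp L' := by
  induction h with
  | nil => left; rfl
  | cons a _ ih =>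
    rw [mp_cons, mp_cons]
    rcases ih with h | h
    · left; rw [h]
    · right; rw [h, mul_neg]
  | swap a b L => right; simp only [mp_cons]; exact gen_swap _ _ _
  | trans _ _ h1 h2 =>
    rcases h1 with h1 | h1 <;> rcases h2 with h2 | h2 <;> simp [h1, h2]

/-- the span of products of generators in `S` -/
inductive Gn (S : Set E) : Lam K E → Prop
  | alg (r : K) : Gn S (algebraMap K _ r)
  | add (x y) : Gn S x → Gn S y → Gn S (x + y)
  | gmul (e : E) (he : e ∈ S) (x) : Gn S x → Gn S (gen e * x)

namespace Gn
variable {S T : Set E}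

theorem smul' (r : K) {x : Lam K E} (h : Gn S x) : Gn S (r • x) := by
  induction h with
  | alg s => rw [Algebra.smul_def, ← map_mul]; exact alg _
  | add x y _ _ h1 h2 => rw [smul_add]; exact add _ _ h1 h2
  | gmul e he x _ h => rw [← mul_smul_comm]; exact gmul _ he _ h

theorem neg' {x : Lam K E} (h : Gn S x) : Gn S (-x) := by
  simpa using smul' (-1) h

theorem sub' {x y : Lam K E} (h : Gn S x) (h' : Gn S y) : Gn S (x - y) := by
  rw [sub_eq_add_neg]; exact add _ _ h (neg' h')

theorem zero' : Gn S (0 : Lam K E) := by simpa using alg (S := S) (0:K)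
theorem one' : Gn S (1 : Lam K E) := by simpa using alg (S := S) (1:K)

theorem mono' (hST : S ⊆ T) {x : Lam K E} (h : Gn S x) : Gn T x := by
  induction h with
  | alg s => exact alg _
  | add x y _ _ h1 h2 => exact add _ _ h1 h2
  | gmul e he x _ h => exact gmul _ (hST he) _ h

theorem mp' {L : List E} (h : ∀ e ∈ L, e ∈ S) : Gn S (mp L : Lam K E) := by
  induction L with
  | nil => exact one'
  | cons a L ih =>
    rw [mp_cons]
    exact gmul _ (h a (by simp)) _ (ih fun e he => h e (by simp [he]))

theorem con' (d : Module.Dual K (E →₀ K)) {x : Lam K E} (h : Gn S x) : Gn S (con d x) := by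
  induction h with
  | alg s => rw [con_algebraMap]; exact zero'
  | add x y _ _ h1 h2 => rw [map_add]; exact add _ _ h1 h2
  | gmul e he x hx h => rw [con_gen_mul]; exact sub' (smul' _ hx) (gmul _ he _ h)

theorem dl_zero (f : E) (hf : f ∉ S) {x : Lam K E} (h : Gn S x) : con (dl f) x = 0 := by
  induction h with
  | alg s => rw [con_algebraMap]
  | add x y _ _ h1 h2 => rw [map_add, h1, h2, add_zero]
  | gmul e he x hx h =>
    rw [con_gen_mul, h, dl_ne f e (by rintro rfl; exact hf he)]; simp

theorem split (f : E) {x : Lam K E} (h : Gn S x) :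
    ∃ y z : Lam K E, Gn (S \ {f}) y ∧ Gn (S \ {f}) z ∧ x = y + gen f * z := by
  induction h with
  | alg s => exact ⟨_, 0, alg s, zero', by simp⟩
  | add x y _ _ h1 h2 =>
    obtain ⟨a, b, ha, hb, rfl⟩ := h1
    obtain ⟨c, d, hc, hd, rfl⟩ := h2
    exact ⟨_, _, add _ _ ha hc, add _ _ hb hd, by rw [mul_add]; abel⟩
  | gmul e he x hx h =>
    obtain ⟨a, b, ha, hb, rfl⟩ := h
    by_cases hef : e = f
    · subst hef
      exact ⟨0, a, zero', ha, by rw [mul_add, gen_sq]; simp⟩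
    · exact ⟨gen e * a, -(gen e * b), gmul e (show e ∈ S \ {f} from ⟨he, hef⟩) _ ha, neg' (gmul e (show e ∈ S \ {f} from ⟨he, hef⟩) _ hb), by
        rw [mul_add, gen_swap e f, mul_neg]⟩

theorem dl_split (f : E) {y z : Lam K E} (hy : Gn (S \ {f}) y) (hz : Gn (S \ {f}) z) :
    con (dl f) (y + gen f * z) = z := by
  rw [map_add, dl_zero f (by simp) hy, con_gen_mul, dl_self, dl_zero f (by simp) hz]; simp

theorem dl' (f : E) {x : Lam K E} (h : Gn S x) : Gn (S \ {f}) (con (dl f) x) := by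
  obtain ⟨y, z, hy, hz, rfl⟩ := split f h
  rw [dl_split f hy hz]; exact hz

end Gn

noncomputable def mapL (q : (E →₀ K) →ₗ[K] (E →₀ K)) : Lam K E →ₐ[K] Lam K E := ExteriorAlgebra.map q

theorem mapL_gen (q : (E →₀ K) →ₗ[K] (E →₀ K)) (e : E) :
    mapL q (gen e) = ExteriorAlgebra.ι K (q (Finsupp.single e 1)) := by
  simp [mapL, gen]

theorem mapL_con (q : (E →₀ K) →ₗ[K] (E →₀ K)) (d : Module.Dual K (E →₀ K)) (hd : d ∘ₗ q = d) (x : Lam K E) :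
    mapL q (con d x) = con d (mapL q x) := by
  induction x using CliffordAlgebra.left_induction with
  | algebraMap r =>
    change mapL q (con d (algebraMap K (Lam K E) r)) = con d (mapL q (algebraMap K (Lam K E) r))
    rw [con_algebraMap, AlgHom.commutes, con_algebraMap, map_zero]
  | add x y hx hy => simp only [map_add, hx, hy]
  | ι_mul x m hx =>
    change mapL q (con d (ExteriorAlgebra.ι K m * x)) = con d (mapL q (ExteriorAlgebra.ι K m * x))
    have h1 : mapL q (ExteriorAlgebra.ι K m) = ExteriorAlgebra.ι K (q m) := by simp [mapL]
    rw [con_ι_mul, map_sub, map_smul, map_mul, map_mul, h1, con_ι_mul, hx]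
    congr 2
    exact (LinearMap.congr_fun hd m).symm

noncomputable def qmap (t : E → E) : (E →₀ K) →ₗ[K] (E →₀ K) := Finsupp.lmapDomain K K t

theorem lam_qmap (t : E → E) : (lam : Module.Dual K (E →₀ K)) ∘ₗ qmap t = lam := by
  ext e; simp [lam, qmap]

theorem mapL_qmap_gen (t : E → E) (e : E) : mapL (qmap t) (gen e : Lam K E) = gen (t e) := by
  rw [mapL_gen]; simp [qmap, gen]

open Classical in
noncomputable def pmap (S : Set E) : (E →₀ K) →ₗ[K] (E →₀ K) :=
  Finsupp.linearCombination K (fun e => if e ∈ S then Finsupp.single e (1:K) else 0)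

theorem mapL_pmap_mem {S : Set E} {e : E} (h : e ∈ S) : mapL (pmap S) (gen e : Lam K E) = gen e := by
  rw [mapL_gen]; simp [pmap, gen, h]

theorem mapL_pmap_not {S : Set E} {e : E} (h : e ∉ S) : mapL (pmap S) (gen e : Lam K E) = 0 := by
  rw [mapL_gen]; simp [pmap, h]

theorem Gn.pmap' {S T : Set E} {x : Lam K E} (h : Gn T x) : Gn (T ∩ S) (mapL (pmap S) x) := by
  induction h with
  | alg s => rw [AlgHom.commutes]; exact alg _
  | add x y _ _ h1 h2 => rw [map_add]; exact add _ _ h1 h2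
  | gmul e he x hx h =>
    rw [map_mul]
    by_cases hS : e ∈ S
    · rw [mapL_pmap_mem hS]; exact gmul e (show e ∈ T ∩ S from ⟨he, hS⟩) _ h
    · rw [mapL_pmap_not hS, zero_mul]; exact zero'

theorem Gn.pmap_id {S : Set E} {x : Lam K E} (h : Gn S x) : mapL (pmap S) x = x := by
  induction h with
  | alg s => rw [AlgHom.commutes]
  | add x y _ _ h1 h2 => rw [map_add, h1, h2]
  | gmul e he x hx h => rw [map_mul, mapL_pmap_mem he, h]

theorem Gn.qmap' {S T : Set E} {t : E → E} (ht : ∀ e ∈ S, t e ∈ T) {x : Lam K E} (h : Gn S x) :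
    Gn T (mapL (qmap t) x) := by
  induction h with
  | alg s => rw [AlgHom.commutes]; exact alg _
  | add x y _ _ h1 h2 => rw [map_add]; exact add _ _ h1 h2
  | gmul e he x hx h => rw [map_mul, mapL_qmap_gen]; exact gmul _ (ht e he) _ h

theorem Gn.qmap_id {S : Set E} {t : E → E} (ht : ∀ e ∈ S, t e = e) {x : Lam K E} (h : Gn S x) :
    mapL (qmap t) x = x := by
  induction h with
  | alg s => rw [AlgHom.commutes]
  | add x y _ _ h1 h2 => rw [map_add, h1, h2]
  | gmul e he x hx h => rw [map_mul, mapL_qmap_gen, h, ht e he]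

theorem mapL_qmap_mp (t : E → E) (L : List E) : mapL (qmap t) (mp L : Lam K E) = mp (L.map t) := by
  induction L with
  | nil => simp [mp_nil]
  | cons a L ih => rw [mp_cons, map_mul, mapL_qmap_gen, ih, List.map_cons, mp_cons]

noncomputable def eps : Lam K E →ₗ[K] K := (ExteriorAlgebra.algebraMapInv (R := K) (M := E →₀ K)).toLinearMap

theorem eps_alg (r : K) : eps (algebraMap K (Lam K E) r) = r :=
  ExteriorAlgebra.algebraMap_leftInverse _ r

/-- star functional -/
noncomputable def Ps : ℕ → (Lam K ℕ →ₗ[K] K)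
  | 0 => eps ∘ₗ con lam
  | (k+1) => Ps k ∘ₗ con (dl (k+1))

theorem Ps_cl (k : ℕ) (x : Lam K ℕ) : Ps k (con lam x) = 0 := by
  induction k generalizing x with
  | zero => simp [Ps, con_con]
  | succ k ih =>
    simp only [Ps, LinearMap.comp_apply]
    rw [con_comm, map_neg, ih, neg_zero]

theorem Gn_empty {S : Set E} (hS : ∀ e, e ∉ S) {x : Lam K E} (h : Gn S x) : con lam x = 0 := by
  induction h with
  | alg s => rw [con_algebraMap]
  | add x y _ _ h1 h2 => rw [map_add, h1, h2, add_zero]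
  | gmul e he x hx h => exact absurd he (hS e)

theorem Ps_van (k i : ℕ) (hi : i ≤ k) (S : Set ℕ) (hS : ∀ e ∈ S, e ≤ k ∧ e ≠ i)
    (x : Lam K ℕ) (hx : Gn S x) : Ps k x = 0 := by
  induction k generalizing x S with
  | zero =>
    simp only [Ps, LinearMap.comp_apply]
    rw [Gn_empty _ hx, map_zero]
    intro e he; have := hS e he; omega
  | succ k ih =>
    simp only [Ps, LinearMap.comp_apply]
    by_cases h : i = k + 1
    · rw [hx.dl_zero, map_zero]
      intro h'; exact (hS _ h').2 h.symm
    · refine ih (by omega) _ ?_ _ (hx.dl' (k+1))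
      rintro e ⟨he, he'⟩
      have := hS e he
      have : e ≠ k + 1 := he'
      omega

theorem Ps_ne (k : ℕ) : Ps k (mp (List.range (k+1)).reverse : Lam K ℕ) = 1 := by
  induction k with
  | zero =>
    simp only [Ps, LinearMap.comp_apply]
    have : (List.range (0+1)).reverse = [0] := rfl
    rw [this, mp_cons, con_gen_mul, mp_nil, con_one, mul_zero, sub_zero, lam_single, one_smul]
    simpa using eps_alg (E := ℕ) (1:K)
  | succ k ih =>
    rw [List.range_succ, List.reverse_append, List.reverse_singleton, List.singleton_append, mp_cons]
    simp only [Ps, LinearMap.comp_apply]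
    have hG : Gn {e | e ≤ k} (mp (List.range (k+1)).reverse : Lam K ℕ) := Gn.mp' (by
      intro e he; simp at he; simp; omega)
    rw [con_gen_mul, hG.dl_zero, dl_self, one_smul, mul_zero, sub_zero, ih]
    simp

end alg
end EPX

namespace EPX
section cyc
variable {K : Type} [Field K]

/-- Non-adjacent pairs of the cycle `0,1,…,l-1`. -/
def El (l : ℕ) : Set (Sym2 ℕ) :=
  {e | ∃ i j, e = s(i, j) ∧ i + 1 < j ∧ j < l ∧ ¬ (i = 0 ∧ j + 1 = l)}

def tq (l : ℕ) (e : Sym2 ℕ) : Sym2 ℕ :=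
  if e = s(l - 2, l) then s(0, l - 2) else Sym2.map (fun x => if x = l then l - 1 else x) e

/-- The functional detecting the cycle; `Pc k` is for the cycle of length `k+4`. -/
noncomputable def Pc : ℕ → (Lam K (Sym2 ℕ) →ₗ[K] K)
  | 0 => eps ∘ₗ con lam ∘ₗ con (dl s(0, 2))
  | (k+1) => Pc k ∘ₗ (mapL (qmap (tq (k+4)))).toLinearMap ∘ₗ con (dl s(0, k+3))
      - Pc k ∘ₗ (mapL (pmap (El (k+4)))).toLinearMap ∘ₗ con lam

theorem Pc_succ (k : ℕ) (x : Lam K (Sym2 ℕ)) : Pc (k+1) x =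
    Pc k (mapL (qmap (tq (k+4))) (con (dl s(0, k+3)) x)) - Pc k (mapL (pmap (El (k+4))) (con lam x)) := rfl

theorem Pc_cl (k : ℕ) (x : Lam K (Sym2 ℕ)) : Pc k (con lam x) = 0 := by
  induction k generalizing x with
  | zero =>
    simp only [Pc, LinearMap.comp_apply]
    rw [con_comm (dl _), map_neg, con_con]; simp
  | succ k ih =>
    rw [Pc_succ, con_con, con_comm, map_neg, map_neg, mapL_con _ _ (lam_qmap _), ih]
    simp

theorem El_mem {l : ℕ} {i j : ℕ} (h1 : i + 1 < j) (h2 : j < l) (h3 : ¬ (i = 0 ∧ j + 1 = l)) :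
    s(i, j) ∈ El l := ⟨i, j, rfl, h1, h2, h3⟩

theorem El_succ {l : ℕ} {e : Sym2 ℕ} (he : e ∈ El (l+1)) :
    e ∈ El l ∨ e = s(0, l - 1) ∨ ∃ i, 1 ≤ i ∧ i + 2 ≤ l ∧ e = s(i, l) := by
  obtain ⟨i, j, rfl, h1, h2, h3⟩ := he
  by_cases hj : j = l
  · right; right; subst hj; exact ⟨i, by omega, by omega, rfl⟩
  · by_cases h : i = 0 ∧ j + 1 = l
    · right; left; obtain ⟨rfl, h⟩ := h; congr 2; omega
    · left; exact El_mem h1 (by omega) h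

theorem El_lt {l : ℕ} {e : Sym2 ℕ} (he : e ∈ El l) {x : ℕ} (hx : x ∈ e) : x < l := by
  obtain ⟨i, j, rfl, h1, h2, h3⟩ := he
  rw [Sym2.mem_iff] at hx; omega

theorem f_not_El {l : ℕ} (hl : 1 ≤ l) : s(0, l - 1) ∉ El l := by
  rintro ⟨i, j, h, h1, h2, h3⟩
  rw [Sym2.eq_iff] at h
  omega

theorem tq_id {l : ℕ} {e : Sym2 ℕ} (he : e ∈ El l) : tq l e = e := by
  have h1 : e ≠ s(l-2, l) := by
    rintro rfl
    exact absurd (El_lt he (x := l) (by simp)) (by omega)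
  obtain ⟨i, j, rfl, h1, h2, h3⟩ := he
  rw [tq, if_neg ‹_›, Sym2.map_mk, if_neg (by omega), if_neg (by omega)]

theorem tq_top {l i : ℕ} (h1 : i + 2 < l) : tq l s(i, l) = s(i, l - 1) := by
  rw [tq, if_neg, Sym2.map_mk, if_neg (by omega), if_pos rfl]
  rw [Sym2.eq_iff]; omega

theorem tq_last {l : ℕ} : tq l s(l - 2, l) = s(0, l - 2) := by
  rw [tq, if_pos rfl]

theorem Pc_van (k : ℕ) (c : ℕ) (hc : c < k + 4) (x : Lam K (Sym2 ℕ))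
    (hx : Gn {e | e ∈ El (k+4) ∧ c ∉ e} x) : Pc k x = 0 := by
  induction k generalizing x c with
  | zero =>
    simp only [Pc, LinearMap.comp_apply]
    by_cases h : c = 0 ∨ c = 2
    · rw [hx.dl_zero, map_zero, map_zero]
      rintro ⟨-, h'⟩
      apply h'; rw [Sym2.mem_iff]; exact h
    · rw [Gn_empty _ (hx.dl' _), map_zero]
      rintro e ⟨⟨⟨i, j, rfl, h1, h2, h3⟩, hce⟩, hf⟩
      simp only [Set.mem_singleton_iff, Sym2.eq_iff] at hf
      rw [Sym2.mem_iff] at hce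
      omega
  | succ k ih =>
    rw [Pc_succ]
    by_cases hck : c = k + 4
    · subst hck
      obtain ⟨y, z, hy, hz, rfl⟩ := hx.split s(0, k+3)
      have hsub : ({e | e ∈ El (k+1+4) ∧ k + 4 ∉ e} \ {s(0, k+3)} : Set (Sym2 ℕ)) ⊆ El (k+4) := by
        rintro e ⟨⟨he, hc⟩, hf⟩
        rcases El_succ (l := k + 4) he with h | h | ⟨i, h1, h2, rfl⟩
        · exact h
        · exact absurd h hf
        · exact absurd (by simp) hc
      rw [Gn.dl_split _ hy hz]
      have hy' := hy.mono' hsub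
      have hz' := hz.mono' hsub
      rw [hz'.qmap_id (fun e he => tq_id he), map_add, map_add, (hy'.con' lam).pmap_id, map_add,
        Pc_cl, con_gen_mul, lam_single, one_smul, map_sub, map_mul, mapL_pmap_not, zero_mul,
        hz'.pmap_id]
      · simp
      · exact f_not_El (l := k + 4) (by omega)
    · have hc4 : c < k + 4 := by omega
      have h2 : Pc k (mapL (pmap (El (k+4))) (con lam x)) = 0 := by
        apply ih c hc4
        refine ((hx.con' lam).pmap').mono' ?_
        rintro e ⟨⟨_, h⟩, h'⟩
        exact ⟨h', h⟩
      rw [h2, sub_zero]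
      by_cases h : c = 0 ∨ c = k + 3
      · rw [hx.dl_zero, map_zero, map_zero]
        rintro ⟨-, h'⟩
        apply h'; rw [Sym2.mem_iff]; exact h
      · apply ih c hc4
        refine (hx.dl' _).qmap' ?_
        rintro e ⟨⟨he, hc⟩, hf⟩
        rcases El_succ (l := k + 4) he with h' | h' | ⟨i, h1, h2, rfl⟩
        · rw [tq_id h']; exact ⟨h', hc⟩
        · exact absurd h' hf
        · rw [Sym2.mem_iff] at hc
          by_cases hi : i + 2 < k + 4
          · rw [tq_top hi]
            refine ⟨El_mem (by omega) (by omega) (by omega), ?_⟩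
            rw [Sym2.mem_iff]; omega
          · obtain rfl : i = k + 4 - 2 := by omega
            rw [tq_last]
            refine ⟨El_mem (by omega) (by omega) (by omega), ?_⟩
            rw [Sym2.mem_iff]; omega

/-- edges `{0,i+2}`, `i` from `m-1` down to `0` -/
def S0 (m : ℕ) : List (Sym2 ℕ) := (List.range m).reverse.map fun i => s(0, i + 2)

theorem S0_succ (m : ℕ) : S0 (m+1) = s(0, m+2) :: S0 m := by
  simp [S0, List.range_succ]

theorem mem_S0 {m : ℕ} {e : Sym2 ℕ} : e ∈ S0 m ↔ ∃ i < m, e = s(0, i + 2) := by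
  simp [S0, eq_comm]

def Sl (k : ℕ) : List (Sym2 ℕ) := S0 (k+1) ++ [s(1, k + 3)]

theorem Pc_ne (k : ℕ) : Pc k (mp (Sl k) : Lam K (Sym2 ℕ)) = 1 := by
  induction k with
  | zero =>
    have : Sl 0 = [s(0,2), s(1,3)] := rfl
    rw [this]
    simp only [Pc, LinearMap.comp_apply, mp_cons, mp_nil]
    rw [con_gen_mul, dl_self, one_smul, con_gen_mul (dl _), dl_ne, con_one, mul_zero, zero_smul, sub_zero, mul_zero, sub_zero, con_gen_mul, con_one]
    · simpa using eps_alg (E := Sym2 ℕ) (1:K)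
    · rw [Ne.eq_def, Sym2.eq_iff]; omega
  | succ k ih =>
    rw [Pc_succ]
    have hSl : Sl (k+1) = s(0, k+3) :: (S0 (k+1) ++ [s(1, k+4)]) := by
      rw [Sl, S0_succ]; rfl
    have h2 : mapL (pmap (El (k+4))) (con lam (mp (Sl (k+1)) : Lam K (Sym2 ℕ))) = 0 := by
      have key : ∀ L : List (Sym2 ℕ), s(1,k+4) ∈ L → s(0, k+3) ∉ L → 
          mapL (pmap (El (k+4))) (mp L : Lam K (Sym2 ℕ)) = 0 := by
        intro L hL _
        induction L with
        | nil => simp at hL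
        | cons a L ih =>
          rw [mp_cons, map_mul]
          by_cases ha : s(1, k+4) = a
          · subst ha
            rw [mapL_pmap_not, zero_mul]
            intro h; exact absurd (El_lt h (x := k+4) (by simp)) (by omega)
          · rw [ih, mul_zero]
            · simpa [ha] using hL
            · simp_all
      rw [hSl, mp_cons, con_gen_mul, map_sub, map_mul, mapL_pmap_not (show s(0, k+3) ∉ El (k+4) from f_not_El (l := k+4) (by omega)),
        zero_mul, map_smul, key]
      · simp
      · simp
      · simp only [List.mem_append, mem_S0, List.mem_singleton, Sym2.eq_iff]
        rintro (⟨i, hi, h⟩ | h) <;> omega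
    rw [h2, map_zero, sub_zero, hSl, mp_cons, con_gen_mul, dl_self, one_smul]
    have hG : Gn {e | e ≠ s(0, k+3)} (mp (S0 (k+1) ++ [s(1, k+4)]) : Lam K (Sym2 ℕ)) := by
      apply Gn.mp'
      rintro e he rfl
      simp only [List.mem_append, mem_S0, List.mem_singleton, Sym2.eq_iff] at he
      rcases he with (⟨i, hi, h⟩ | h) <;> omega
    rw [hG.dl_zero _ (by simp), mul_zero, sub_zero, mapL_qmap_mp]
    have : (S0 (k+1) ++ [s(1, k+4)]).map (tq (k+4)) = Sl k := by
      rw [List.map_append, Sl]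
      congr 1
      · conv_rhs => rw [← List.map_id (S0 (k+1))]
        apply List.map_congr_left
        intro e he
        obtain ⟨i, hi, rfl⟩ := mem_S0.1 he
        exact tq_id (El_mem (by omega) (by omega) (by omega))
      · simp only [List.map_cons, List.map_nil]
        rw [tq_top (by omega)]; rfl
    rw [this, ih]

end cyc
end EPX

namespace EPX
open EP
section tay
variable {K : Type} [Field K] {E : Type} {n : ℕ}

/-- sorted product -/
noncomputable def ms {r : ℕ} (lab : Fin r → E) (U : Finset (Fin r)) : Lam K E :=
  mp ((U.sort (· ≤ ·)).map lab)

theorem con_ms {r : ℕ} (lab : Fin r → E) (U : Finset (Fin r)) :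
    con lam (ms lab U : Lam K E) =
      ∑ k ∈ U, ((-1 : K) ^ ((U.filter (fun j => j < k)).card)) • ms lab (U.erase k) := by
  induction U using Finset.induction_on_min with
  | empty => simp [ms, mp_nil, con_one]
  | insert a s ha ih =>
    have has : a ∉ s := fun h => lt_irrefl _ (ha a h)
    have hins : ∀ t : Finset (Fin r), t ⊆ s → (ms lab (insert a t) : Lam K E) = gen (lab a) * ms lab t := by
      intro t ht
      rw [ms, Finset.sort_insert _ (fun b hb => (ha b (ht hb)).le) (fun h => has (ht h)), List.map_cons, mp_cons, ms]
    rw [hins s subset_rfl, con_gen_mul, lam_single, one_smul, ih, Finset.sum_insert has]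
    have e1 : ((insert a s).filter (fun j => j < a)) = ∅ := by
      ext j; simp only [Finset.mem_filter, Finset.mem_insert, Finset.notMem_empty, iff_false, not_and]
      rintro (rfl | h)
      · exact lt_irrefl _
      · exact not_lt.2 (ha j h).le
    rw [e1, Finset.card_empty, pow_zero, one_smul, Finset.erase_insert has, sub_eq_add_neg,
      Finset.mul_sum, ← Finset.sum_neg_distrib]
    congr 1
    apply Finset.sum_congr rfl
    intro k hk
    have hak : a ≠ k := by rintro rfl; exact has hk
    have e2 : ((insert a s).filter (fun j => j < k)) = insert a (s.filter (fun j => j < k)) := by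
      rw [Finset.filter_insert, if_pos (ha k hk)]
    rw [e2, Finset.card_insert_of_notMem (by simp [has]), Finset.erase_insert_of_ne hak,
      hins _ (Finset.erase_subset _ _), mul_smul_comm, pow_succ, mul_neg_one, neg_smul]

theorem mlcm_mono {r : ℕ} (g : Fin r → (Fin n → ℕ)) {S T : Finset (Fin r)} (h : S ⊆ T) :
    mlcm g S ≤ mlcm g T := fun _ => Finset.sup_mono h

theorem tor_ne {r : ℕ} (g : Fin r → (Fin n → ℕ)) (lab : Fin r → E) (Ψ : Lam K E →ₗ[K] K)
    (w : Fin n → ℕ) (hcl : ∀ x, Ψ (con lam x) = 0)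
    (hvan : ∀ T : Finset (Fin r), mlcm g T ≤ w → mlcm g T ≠ w → Ψ (ms lab T) = 0)
    (S : Finset (Fin r)) (hS : mlcm g S = w) (hne : Ψ (ms lab S) ≠ 0)
    (hmin : ∀ k ∈ S, mlcm g (S.erase k) ≠ mlcm g S) :
    torRank K g S.card (∑ x, w x) ≠ 0 := by
  classical
  set φ : (Finset (Fin r) →₀ K) →ₗ[K] K :=
    Finsupp.linearCombination K (fun T => if mlcm g T = w then Ψ (ms lab T) else 0) with hφ
  have φs : ∀ T, φ (Finsupp.single T 1) = if mlcm g T = w then Ψ (ms lab T) else 0 := by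
    intro T; simp [hφ]
  have bs : ∀ U : Finset (Fin r), bdT K g (Finsupp.single U 1) = ∑ k ∈ U, if mlcm g (U.erase k) = mlcm g U
      then ((-1 : K) ^ ((U.filter (fun j => j < k)).card)) • Finsupp.single (U.erase k) (1 : K)
      else 0 := by
    intro U; rw [bdT, Finsupp.lsum_single, LinearMap.toSpanSingleton_apply, one_smul]
  have hφb : ∀ U : Finset (Fin r), φ (bdT K g (Finsupp.single U 1)) = 0 := by
    intro U
    rw [bs, map_sum]
    by_cases hU : mlcm g U = w
    · rw [← hcl (ms lab U), con_ms, map_sum]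
      apply Finset.sum_congr rfl
      intro k _
      rw [map_smul]
      split_ifs with h
      · rw [map_smul, φs, if_pos (h.trans hU)]
      · rw [hvan _ (hU ▸ mlcm_mono g (Finset.erase_subset _ _)) (hU ▸ h)]; simp
    · apply Finset.sum_eq_zero
      intro k _
      split_ifs with h
      · rw [map_smul, φs, if_neg (h ▸ hU), smul_zero]
      · simp
  have hker : bdT K g (Finsupp.single S 1) = 0 := by
    rw [bs]; exact Finset.sum_eq_zero fun k hk => if_neg (hmin k hk)
  unfold torRank
  set A := strand K g S.card (∑ x, w x) ⊓ LinearMap.ker (bdT K g) with hA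
  set B := Submodule.map (bdT K g) (strand K g (S.card+1) (∑ x, w x)) with hB
  have hSA : Finsupp.single S 1 ∈ A :=
    ⟨Submodule.subset_span ⟨S, rfl, by rw [hS], rfl⟩, hker⟩
  have hBφ : ∀ b ∈ B, φ b = 0 := by
    rintro _ ⟨u, -, rfl⟩
    have : φ ∘ₗ bdT K g = 0 := by
      ext U; simpa using hφb U
    exact LinearMap.congr_fun this u
  have hlt : B ⊓ A < A := by
    refine lt_of_le_of_ne inf_le_right fun h => ?_
    have : Finsupp.single S 1 ∈ B := (inf_eq_right.1 h) hSA
    have := hBφ _ this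
    rw [φs, if_pos hS] at this
    exact hne this
  have := Submodule.finrank_lt_finrank_of_lt hlt
  omega

theorem tor_zero {r : ℕ} (g : Fin r → (Fin n → ℕ)) (p j : ℕ) (hp : r < p) : torRank K g p j = 0 := by
  have : strand K g p j = ⊥ := by
    rw [strand, Submodule.span_eq_bot]
    rintro c ⟨S, hS, -⟩
    have := Finset.card_le_univ S
    simp at this; omega
  rw [torRank, this, bot_inf_eq]; simp

noncomputable def ed (G : SimpleGraph (Fin n)) (k : Fin (edgeFins G).card) : Sym2 (Fin n) :=
  ((edgeFins G).equivFin.symm k : Sym2 (Fin n))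

theorem ed_inj (G : SimpleGraph (Fin n)) : Function.Injective (ed G) :=
  Subtype.val_injective.comp (edgeFins G).equivFin.symm.injective

theorem mem_edgeFins (G : SimpleGraph (Fin n)) (e) : e ∈ edgeFins G ↔ e ∈ G.edgeSet := by
  simp [edgeFins]

theorem ed_mem (G : SimpleGraph (Fin n)) (k) : ed G k ∈ G.edgeSet :=
  (mem_edgeFins G _).1 ((edgeFins G).equivFin.symm k).2

theorem ed_surj (G : SimpleGraph (Fin n)) (e) (he : e ∈ G.edgeSet) : ∃ k, ed G k = e := by
  refine ⟨(edgeFins G).equivFin ⟨e, (mem_edgeFins G _).2 he⟩, ?_⟩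
  simp [ed]

open Classical in
theorem mlcm_edge (G : SimpleGraph (Fin n)) (T) (x : Fin n) :
    mlcm (edgeGens G) T x = if ∃ k ∈ T, x ∈ ed G k then 1 else 0 := by
  unfold mlcm
  split_ifs with h
  · obtain ⟨k, hk, hx⟩ := h
    apply le_antisymm
    · apply Finset.sup_le
      intro b _; unfold edgeGens; split_ifs <;> omega
    · refine le_trans ?_ (Finset.le_sup hk)
      exact (if_pos hx).ge
  · apply Nat.eq_zero_of_le_zero
    apply Finset.sup_le
    intro b hb
    exact (if_neg fun hx => h ⟨b, hb, hx⟩).le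

theorem core (G : SimpleGraph (Fin n)) (Q : List (Sym2 (Fin n))) (hQ : Q.Nodup)
    (hE : ∀ e ∈ Q, e ∈ G.edgeSet) (W : Finset (Fin n)) (hW : ∀ x, x ∈ W ↔ ∃ e ∈ Q, x ∈ e)
    (hmin : ∀ e ∈ Q, ∃ x ∈ e, ∀ e' ∈ Q, x ∈ e' → e' = e)
    (lab : Sym2 (Fin n) → E) (Ψ : Lam K E →ₗ[K] K) (hcl : ∀ x, Ψ (con lam x) = 0)
    (hvan : ∀ c ∈ W, ∀ x, Gn (lab '' {e | e ∈ G.edgeSet ∧ (∀ y ∈ e, y ∈ W) ∧ c ∉ e}) x → Ψ x = 0)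
    (hne : Ψ (mp (Q.map lab)) ≠ 0) :
    torRank K (edgeGens G) Q.length W.card ≠ 0 := by
  classical
  set S : Finset (Fin (edgeFins G).card) := Finset.univ.filter (fun k => ed G k ∈ Q) with hSdef
  have hperm : ((S.sort (· ≤ ·)).map (ed G)).Perm Q := by
    rw [List.perm_ext_iff_of_nodup ((Finset.sort_nodup _ _).map (ed_inj G)) hQ]
    intro e
    simp only [List.mem_map, Finset.mem_sort, hSdef, Finset.mem_filter, Finset.mem_univ, true_and]
    constructor
    · rintro ⟨k, hk, rfl⟩; exact hk
    · intro he
      obtain ⟨k, rfl⟩ := ed_surj G e (hE e he)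
      exact ⟨k, he, rfl⟩
  have hcard : S.card = Q.length := by
    have := hperm.length_eq
    simpa using this
  set w : Fin n → ℕ := fun x => if x ∈ W then 1 else 0 with hw
  have hsum : ∑ x, w x = W.card := by simp [hw]
  rw [← hcard, ← hsum]
  have hSW : mlcm (edgeGens G) S = w := by
    funext x
    rw [mlcm_edge, hw]
    congr 1
    rw [hW, eq_iff_iff]
    constructor
    · rintro ⟨k, hk, hx⟩; exact ⟨_, (Finset.mem_filter.1 hk).2, hx⟩
    · rintro ⟨e, he, hx⟩
      obtain ⟨k, rfl⟩ := ed_surj G e (hE e he)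
      exact ⟨k, by simp [hSdef, he], hx⟩
  refine tor_ne (edgeGens G) (fun k => lab (ed G k)) Ψ w hcl ?_ S hSW ?_ ?_
  · intro T hT hT'
    have hin : ∀ k ∈ T, ∀ y ∈ ed G k, y ∈ W := by
      intro k hk y hy
      by_contra hyW
      have := hT y
      rw [mlcm_edge, if_pos ⟨k, hk, hy⟩, hw] at this
      simp [hyW] at this
    obtain ⟨c, hc⟩ : ∃ c, mlcm (edgeGens G) T c ≠ w c := by
      by_contra h; push Not at h; exact hT' (funext h)
    have hcW : c ∈ W ∧ ¬ ∃ k ∈ T, c ∈ ed G k := by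
      rw [mlcm_edge, hw] at hc
      by_cases h1 : ∃ k ∈ T, c ∈ ed G k
      · obtain ⟨k, hk, hck⟩ := h1
        exact absurd (by rw [if_pos ⟨k, hk, hck⟩]; simp [hin k hk c hck]) hc
      · refine ⟨?_, h1⟩
        by_contra h2
        exact hc (by rw [if_neg h1]; simp [h2])
    apply hvan c hcW.1
    apply Gn.mp'
    intro e he
    simp only [List.mem_map, Finset.mem_sort] at he
    obtain ⟨k, hk, rfl⟩ := he
    exact ⟨ed G k, ⟨ed_mem G k, hin k hk, fun h => hcW.2 ⟨k, hk, h⟩⟩, rfl⟩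
  · have h2 : ((S.sort (· ≤ ·)).map (fun k => lab (ed G k))).Perm (Q.map lab) := by
      have := hperm.map lab
      rwa [List.map_map] at this
    rw [ms]
    rcases mp_perm (K := K) h2 with h | h
    · rw [h]; exact hne
    · rw [h, map_neg]; exact neg_ne_zero.2 hne
  · intro k hk h
    have hkQ : ed G k ∈ Q := (Finset.mem_filter.1 hk).2
    obtain ⟨x, hx, hu⟩ := hmin _ hkQ
    have := congrFun h x
    rw [mlcm_edge G S, if_pos ⟨k, hk, hx⟩, mlcm_edge, if_neg] at this
    · exact absurd this (by norm_num)
    · rintro ⟨k', hk', hx'⟩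
      rw [Finset.mem_erase] at hk'
      exact hk'.1 (ed_inj G (hu _ (Finset.mem_filter.1 hk'.2).2 hx'))

end tay
end EPX

namespace EPX
open EP

theorem S0_nodup (m : ℕ) : (S0 m).Nodup := by
  refine List.Nodup.map ?_ (List.nodup_reverse.2 List.nodup_range)
  intro i j h
  rw [Sym2.eq_iff] at h; omega

theorem Sl_nodup (k : ℕ) : (Sl k).Nodup := by
  rw [Sl, List.nodup_append]
  refine ⟨S0_nodup _, by simp, ?_⟩
  intro a ha b hb hab
  rw [List.mem_singleton] at hb
  obtain ⟨i, hi, rfl⟩ := mem_S0.1 ha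
  rw [hb, Sym2.eq_iff] at hab
  omega

theorem mem_Sl {k : ℕ} {e : Sym2 ℕ} : e ∈ Sl k ↔ (∃ i < k + 1, e = s(0, i+2)) ∨ e = s(1, k+3) := by
  rw [Sl, List.mem_append, mem_S0, List.mem_singleton]

section fin
variable (K : Type) [Field K] {n k : ℕ} (G : SimpleGraph (Fin n)) (F R : ℕ → Fin n)

theorem cyc_ne (R : Fin n → ℕ) (hR : ∀ i < k + 4, R (F i) = i)
    (hadj : ∀ i j, i < j → j < k + 4 → (G.Adj (F i) (F j) ↔ i + 1 < j ∧ ¬ (i = 0 ∧ j + 1 = k + 4))) :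
    gBetti K G (k+1) (k+4) ≠ 0 := by
  classical
  have hFi : ∀ i < k + 4, ∀ j < k + 4, F i = F j → i = j := by
    intro i hi j hj h
    rw [← hR i hi, ← hR j hj, h]
  have hmapR : ((Sl k).map (Sym2.map F)).map (Sym2.map R) = Sl k := by
    rw [List.map_map]
    conv_rhs => rw [← List.map_id (Sl k)]
    apply List.map_congr_left
    intro e he
    rcases mem_Sl.1 he with ⟨i, hi, rfl⟩ | rfl
    · simp only [Function.comp, Sym2.map_mk, id]
      rw [hR _ (by omega), hR _ (by omega)]
    · simp only [Function.comp, Sym2.map_mk, id]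
      rw [hR _ (by omega), hR _ (by omega)]
  have hmem : ∀ e, e ∈ (Sl k).map (Sym2.map F) ↔
      (∃ i < k + 1, e = s(F 0, F (i+2))) ∨ e = s(F 1, F (k+3)) := by
    intro e
    rw [List.mem_map]
    constructor
    · rintro ⟨e, he, rfl⟩
      rcases mem_Sl.1 he with ⟨i, hi, rfl⟩ | rfl
      · left; exact ⟨i, hi, rfl⟩
      · right; rfl
    · rintro (⟨i, hi, rfl⟩ | rfl)
      · exact ⟨_, mem_Sl.2 (Or.inl ⟨i, hi, rfl⟩), rfl⟩
      · exact ⟨_, mem_Sl.2 (Or.inr rfl), rfl⟩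
  have hlen : ((Sl k).map (Sym2.map F)).length = k + 2 := by simp [Sl, S0]
  have hWc : ((Finset.range (k+4)).image F).card = k + 4 := by
    rw [Finset.card_image_of_injOn, Finset.card_range]
    intro i hi j hj h
    exact hFi i (by simpa using hi) j (by simpa using hj) h
  have := core (K := K) G ((Sl k).map (Sym2.map F)) (List.Nodup.of_map (Sym2.map R) (by rw [hmapR]; exact Sl_nodup k))
    ?_ ((Finset.range (k+4)).image F) ?_ ?_ (Sym2.map R) (Pc k) (Pc_cl k) ?_ ?_
  · rw [hlen, hWc] at this; exact this
  · intro e he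
    rcases (hmem e).1 he with ⟨i, hi, rfl⟩ | rfl
    · rw [SimpleGraph.mem_edgeSet, hadj _ _ (by omega) (by omega)]; omega
    · rw [SimpleGraph.mem_edgeSet, hadj _ _ (by omega) (by omega)]; omega
  · intro x
    simp only [Finset.mem_image, Finset.mem_range]
    constructor
    · rintro ⟨i, hi, rfl⟩
      by_cases h0 : i = 0
      · subst h0; exact ⟨_, (hmem _).2 (Or.inl ⟨0, by omega, rfl⟩), by simp⟩
      by_cases h1 : i = 1
      · subst h1; exact ⟨_, (hmem _).2 (Or.inr rfl), by simp⟩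
      by_cases h3 : i = k + 3
      · subst h3; exact ⟨_, (hmem _).2 (Or.inr rfl), by simp⟩
      · obtain ⟨j, rfl⟩ : ∃ j, i = j + 2 := ⟨i - 2, by omega⟩
        exact ⟨_, (hmem _).2 (Or.inl ⟨j, by omega, rfl⟩), by simp⟩
    · rintro ⟨e, he, hx⟩
      rcases (hmem e).1 he with ⟨i, hi, rfl⟩ | rfl
      · rcases Sym2.mem_iff.1 hx with rfl | rfl
        · exact ⟨0, by omega, rfl⟩
        · exact ⟨i+2, by omega, rfl⟩
      · rcases Sym2.mem_iff.1 hx with rfl | rfl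
        · exact ⟨1, by omega, rfl⟩
        · exact ⟨k+3, by omega, rfl⟩
  · intro e he
    rcases (hmem e).1 he with ⟨i, hi, rfl⟩ | rfl
    · refine ⟨F (i+2), by simp, ?_⟩
      intro e' he' hx
      rcases (hmem e').1 he' with ⟨j, hj, rfl⟩ | rfl
      · rcases Sym2.mem_iff.1 hx with h | h
        · have := hFi _ (by omega) _ (by omega) h; omega
        · rw [h]
      · rcases Sym2.mem_iff.1 hx with h | h
        · have := hFi _ (by omega) _ (by omega) h; omega
        · have := hFi _ (by omega) _ (by omega) h; omega
    · refine ⟨F 1, by simp, ?_⟩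
      intro e' he' hx
      rcases (hmem e').1 he' with ⟨j, hj, rfl⟩ | rfl
      · rcases Sym2.mem_iff.1 hx with h | h
        · have := hFi _ (by omega) _ (by omega) h; omega
        · have := hFi _ (by omega) _ (by omega) h; omega
      · rfl
  · intro c hc x hx
    simp only [Finset.mem_image, Finset.mem_range] at hc
    obtain ⟨c, hc, rfl⟩ := hc
    refine Pc_van k c hc x (hx.mono' ?_)
    rintro _ ⟨e, ⟨he, heW, hce⟩, rfl⟩
    have key : ∀ i j, i < j → j < k + 4 → e = s(F i, F j) → Sym2.map R e ∈ El (k+4) ∧ c ∉ Sym2.map R e := by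
      rintro i j hij hj rfl
      rw [Sym2.map_mk, hR i (by omega), hR j hj]
      rw [SimpleGraph.mem_edgeSet, hadj i j hij hj] at he
      refine ⟨El_mem he.1 hj he.2, ?_⟩
      intro h
      apply hce
      rcases Sym2.mem_iff.1 h with rfl | rfl <;> simp
    induction e using Sym2.ind with
    | _ a b =>
      have ha := heW a (by simp)
      have hb := heW b (by simp)
      simp only [Finset.mem_image, Finset.mem_range] at ha hb
      obtain ⟨i, hi, rfl⟩ := ha
      obtain ⟨j, hj, rfl⟩ := hb
      rcases lt_trichotomy i j with h | h | h
      · exact key i j h hj rfl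
      · subst h; exact absurd he (by simp)
      · exact key j i h hi Sym2.eq_swap
  · rw [hmapR, Pc_ne]; exact one_ne_zero

theorem star_ne (v : Fin n) (R : Fin n → ℕ) (hR : ∀ i < k + 4, R (F i) = i) (hv0 : R v = 0)
    (hv : ∀ i < k + 4, G.Adj v (F i)) :
    gBetti K G (k+3) (k+5) ≠ 0 := by
  classical
  have hFi : ∀ i < k + 4, ∀ j < k + 4, F i = F j → i = j := by
    intro i hi j hj h
    rw [← hR i hi, ← hR j hj, h]
  have hvF : ∀ i < k + 4, v ≠ F i := fun i hi => (hv i hi).ne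
  set Q := (List.range (k+4)).reverse.map (fun i => s(v, F i)) with hQ
  set lab : Sym2 (Fin n) → ℕ := fun e => (Sym2.map R e).sup with hlab
  have hmapR : Q.map lab = (List.range (k+4)).reverse := by
    rw [hQ, List.map_map]
    conv_rhs => rw [← List.map_id (List.range (k+4)).reverse]
    apply List.map_congr_left
    intro i hi
    have hi : i < k + 4 := by simpa using hi
    simp [hlab, hv0, hR i hi]
  have hmem : ∀ e, e ∈ Q ↔ ∃ i < k + 4, e = s(v, F i) := by
    intro e; simp [hQ, eq_comm]
  have hlen : Q.length = k + 4 := by simp [hQ]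
  have hWc : (insert v ((Finset.range (k+4)).image F)).card = k + 5 := by
    rw [Finset.card_insert_of_notMem, Finset.card_image_of_injOn, Finset.card_range]
    · intro i hi j hj h
      exact hFi i (by simpa using hi) j (by simpa using hj) h
    · simp only [Finset.mem_image, Finset.mem_range]
      rintro ⟨i, hi, h⟩; exact hvF i hi h.symm
  have hWm : ∀ x, x ∈ insert v ((Finset.range (k+4)).image F) ↔ x = v ∨ ∃ i < k + 4, x = F i := by
    intro x; simp [eq_comm]
  have := core (K := K) G Q (List.Nodup.of_map lab (by rw [hmapR]; exact List.nodup_reverse.2 List.nodup_range))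
    ?_ (insert v ((Finset.range (k+4)).image F)) ?_ ?_ lab (Ps (k+3)) (Ps_cl _) ?_ ?_
  · rw [hlen, hWc] at this; exact this
  · intro e he
    obtain ⟨i, hi, rfl⟩ := (hmem e).1 he
    exact hv i hi
  · intro x
    rw [hWm]
    constructor
    · rintro (rfl | ⟨i, hi, rfl⟩)
      · exact ⟨_, (hmem _).2 ⟨0, by omega, rfl⟩, by simp⟩
      · exact ⟨_, (hmem _).2 ⟨i, hi, rfl⟩, by simp⟩
    · rintro ⟨e, he, hx⟩
      obtain ⟨i, hi, rfl⟩ := (hmem e).1 he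
      rcases Sym2.mem_iff.1 hx with rfl | rfl
      · left; rfl
      · right; exact ⟨i, hi, rfl⟩
  · intro e he
    obtain ⟨i, hi, rfl⟩ := (hmem e).1 he
    refine ⟨F i, by simp, ?_⟩
    intro e' he' hx
    obtain ⟨j, hj, rfl⟩ := (hmem e').1 he'
    rcases Sym2.mem_iff.1 hx with h | h
    · exact absurd h.symm (hvF i hi)
    · rw [h]
  · intro c hc x hx
    rw [hWm] at hc
    have hRc : R c ≤ k + 3 := by
      rcases hc with rfl | ⟨i, hi, rfl⟩
      · omega
      · rw [hR i hi]; omega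
    refine Ps_van (k+3) (R c) hRc _ ?_ x hx
    rintro _ ⟨e, ⟨he, heW, hce⟩, rfl⟩
    induction e using Sym2.ind with
    | _ a b =>
      have ha := heW a (by simp)
      have hb := heW b (by simp)
      rw [hWm] at ha hb
      rw [Sym2.mem_iff, not_or] at hce
      have hab : a ≠ b := G.ne_of_adj he
      simp only [hlab, Sym2.map_mk, Sym2.sup_mk]
      rcases ha with rfl | ⟨i, hi, rfl⟩ <;> rcases hb with rfl | ⟨j, hj, rfl⟩
      · exact absurd rfl hab
      · rw [hv0, hR j hj]
        rcases hc with rfl | ⟨m, hm, rfl⟩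
        · exact absurd rfl hce.1
        · rw [hR m hm]
          have : m ≠ j := by rintro rfl; exact hce.2 rfl
          omega
      · rw [hv0, hR i hi]
        rcases hc with rfl | ⟨m, hm, rfl⟩
        · exact absurd rfl hce.2
        · rw [hR m hm]
          have : m ≠ i := by rintro rfl; exact hce.1 rfl
          omega
      · have hij : i ≠ j := by rintro rfl; exact hab rfl
        rw [hR i hi, hR j hj]
        rcases hc with rfl | ⟨m, hm, rfl⟩
        · rw [hv0]; omega
        · rw [hR m hm]
          have : m ≠ i := by rintro rfl; exact hce.1 rfl
          have : m ≠ j := by rintro rfl; exact hce.2 rfl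
          omega
  · rw [hmapR, Ps_ne]; exact one_ne_zero

end fin
end EPX


/-- If `I(G)` has almost maximal finite index and `C` is an induced cycle
of length `> 3` in the complement graph `Ḡ`, then every vertex outside `C` is adjacent in
`Ḡ` to some vertex of `C`. -/
theorem statement7 (K : Type) [Field K] (n : ℕ) (G : SimpleGraph (Fin n))
    (h : EP.AMFI K G) (l : ℕ) (hl : 3 < l) (f : ZMod l → Fin n)
    (hinj : Function.Injective f)
    (hcyc : ∀ i j : ZMod l, (Gᶜ).Adj (f i) (f j) ↔ (j = i + 1 ∨ i = j + 1))
    (v : Fin n) (hv : v ∉ Set.range f) :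
    ∃ i : ZMod l, (Gᶜ).Adj v (f i) := by
  classical
  by_contra hcon
  push Not at hcon
  obtain ⟨k, rfl⟩ : ∃ k, l = k + 4 := ⟨l - 4, by omega⟩
  set F : ℕ → Fin n := fun i => f (i : ZMod (k+4)) with hF
  have hcast : ∀ i j : ℕ, ((i : ZMod (k+4)) = (j : ZMod (k+4)) ↔ i % (k+4) = j % (k+4)) :=
    fun i j => ZMod.natCast_eq_natCast_iff' i j (k+4)
  have hFi : ∀ i < k + 4, ∀ j < k + 4, F i = F j → i = j := by
    intro i hi j hj h
    have := (hcast i j).1 (hinj h)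
    rwa [Nat.mod_eq_of_lt hi, Nat.mod_eq_of_lt hj] at this
  set R : Fin n → ℕ := fun x => if h : ∃ i < k + 4, F i = x then h.choose else 0 with hRdef
  have hR : ∀ i < k + 4, R (F i) = i := by
    intro i hi
    have h : ∃ j < k + 4, F j = F i := ⟨i, hi, rfl⟩
    have h2 : R (F i) = h.choose := dif_pos h
    rw [h2]
    exact hFi _ h.choose_spec.1 _ hi h.choose_spec.2
  have hv0 : R v = 0 := by
    refine dif_neg ?_
    rintro ⟨i, hi, h⟩
    exact hv ⟨_, h⟩
  have hvadj : ∀ i < k + 4, G.Adj v (F i) := by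
    intro i hi
    by_contra h
    refine hcon (i : ZMod (k+4)) ((SimpleGraph.compl_adj _ _ _).2 ⟨?_, h⟩)
    rintro h'
    exact hv ⟨_, h'.symm⟩
  have hadj : ∀ i j, i < j → j < k + 4 →
      (G.Adj (F i) (F j) ↔ i + 1 < j ∧ ¬ (i = 0 ∧ j + 1 = k + 4)) := by
    intro i j hij hj
    have h1 := hcyc (i : ZMod (k+4)) (j : ZMod (k+4))
    rw [SimpleGraph.compl_adj] at h1
    have hne : F i ≠ F j := fun h => by
      have := hFi i (by omega) j hj h
      omega
    have e1 : ((j : ZMod (k+4)) = (i : ZMod (k+4)) + 1) ↔ j = i + 1 := by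
      have := hcast j (i+1)
      rw [Nat.cast_add, Nat.cast_one, Nat.mod_eq_of_lt hj, Nat.mod_eq_of_lt (by omega)] at this
      exact this
    have e2 : ((i : ZMod (k+4)) = (j : ZMod (k+4)) + 1) ↔ (i = 0 ∧ j + 1 = k + 4) := by
      have := hcast i (j+1)
      rw [Nat.cast_add, Nat.cast_one, Nat.mod_eq_of_lt (show i < k + 4 by omega)] at this
      rw [this]
      by_cases h : j + 1 = k + 4
      · rw [h, Nat.mod_self]; simp
      · rw [Nat.mod_eq_of_lt (by omega)]; omega
    rw [e1, e2] at h1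
    have h2 : (¬ G.Adj (F i) (F j)) ↔ (j = i + 1 ∨ (i = 0 ∧ j + 1 = k + 4)) :=
      ⟨fun h => h1.1 ⟨hne, h⟩, fun h => (h1.2 h).2⟩
    rw [← not_iff_not, h2]
    omega
  have b1 := EPX.cyc_ne K G F R hR hadj
  have b2 := EPX.star_ne K G F v R hR hv0 hvadj
  have hidx : EP.gIndex K G ≤ ((k + 1 : ℕ) : ℕ∞) :=
    sInf_le ⟨k+1, k+4, rfl, by omega, b1⟩
  have hpd : k + 3 ≤ EP.gPd K G := by
    refine le_csSup ?_ ⟨k+5, b2⟩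
    refine ⟨(EP.edgeFins G).card, ?_⟩
    rintro i ⟨j, hj⟩
    by_contra hi
    exact hj (EPX.tor_zero _ _ _ (by omega))
  have h' : EP.gIndex K G + 1 = (EP.gPd K G : ℕ∞) := h
  have h3 : (EP.gPd K G : ℕ∞) ≤ ((k + 1 + 1 : ℕ) : ℕ∞) := by
    rw [← h', Nat.cast_add (k+1) 1, Nat.cast_one]
    gcongr
  have h4 : EP.gPd K G ≤ k + 1 + 1 := by exact_mod_cast h3
  omega
end
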